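/- arXiv:1609.06724 — 9 statements merged into one kernel-verified Lean document; each statement's English description precedes it below -/
import Mathlib

section
/- Let Q : Fin 4 → Fin 2 → ℂ satisfy the F-term equations: for all a, b ∈ Fin 2, ∑_{r ∈ Fin 4} Q r a * Q r b = 0. Define the 4×4 complex matrix V by V r s = Q r 0 * Q s 1 − Q r 1 * Q s 0 (the gauge-invariant meson matrix V^{rs} = ε^{ab} Q^r_a Q^s_b). Then V is antisymmetric (Vᵀ = −V), satisfies V * V = 0, and has rank at most 2. -/
open Matrix

/-!
Let `Ω = ε` and view `Q` as a flavour-by-colour matrix. The mesons are `V = Q Ω Qᵀ`, and the F-terms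
say `Qᵀ Q = 0`. Hence `V` inherits antisymmetry from `Ω`, the product `V V = Q Ω (Qᵀ Q) Ω Qᵀ`
vanishes, and `V` factors through the colour space, so its rank is at most the number of colours.
-/

variable {ι κ R : Type*}

section MesonMatrix

variable [Fintype κ]

/-- The meson matrix `V^{rs} = Ω^{ab} Q^r_a Q^s_b` of quarks `Q` with flavour index in `ι` and
colour index in `κ`, contracted with an arbitrary bilinear form `Ω` on colour space. -/
def mesonMatrix [NonUnitalNonAssocSemiring R] (Ω : Matrix κ κ R) (Q : Matrix ι κ R) :
    Matrix ι ι R :=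
  Q * Ω * Qᵀ

theorem transpose_mesonMatrix [NonUnitalCommSemiring R] (Ω : Matrix κ κ R) (Q : Matrix ι κ R) :
    (mesonMatrix Ω Q)ᵀ = mesonMatrix Ωᵀ Q := by
  simp only [mesonMatrix, transpose_mul, transpose_transpose, Matrix.mul_assoc]

theorem mesonMatrix_neg [NonUnitalNonAssocRing R] (Ω : Matrix κ κ R) (Q : Matrix ι κ R) :
    mesonMatrix (-Ω) Q = -mesonMatrix Ω Q := by
  simp only [mesonMatrix, Matrix.mul_neg, Matrix.neg_mul]

theorem mesonMatrix_mul_mesonMatrix_eq_zero [Fintype ι]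
    [NonUnitalSemiring R] {Q : Matrix ι κ R} (hQ : Qᵀ * Q = 0) (Ω Ω' : Matrix κ κ R) :
    mesonMatrix Ω Q * mesonMatrix Ω' Q = 0 :=
  calc
    mesonMatrix Ω Q * mesonMatrix Ω' Q = Q * Ω * (Qᵀ * Q) * (Ω' * Qᵀ) := by
      simp only [mesonMatrix, Matrix.mul_assoc]
    _ = 0 := by rw [hQ, Matrix.mul_zero, Matrix.zero_mul]

theorem rank_mesonMatrix_le_card [Fintype ι] [CommSemiring R] [StrongRankCondition R]
    (Ω : Matrix κ κ R) (Q : Matrix ι κ R) :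
    (mesonMatrix Ω Q).rank ≤ Fintype.card κ :=
  calc
    (mesonMatrix Ω Q).rank ≤ (Q * Ω).rank := rank_mul_le_left _ _
    _ ≤ Fintype.card κ := rank_le_card_width _

end MesonMatrix

/-- The invariant tensor `ε^{ab}` of `SU(2)`, normalised by `ε^{01} = 1`. -/
def su2Epsilon (R : Type*) [Ring R] : Matrix (Fin 2) (Fin 2) R :=
  !![0, 1; -1, 0]

theorem transpose_su2Epsilon [Ring R] : (su2Epsilon R)ᵀ = -su2Epsilon R := by
  ext a b
  fin_cases a <;> fin_cases b <;> simp [su2Epsilon]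

theorem mesonMatrix_su2Epsilon_apply [CommRing R] (Q : Matrix ι (Fin 2) R) (r s : ι) :
    mesonMatrix (su2Epsilon R) Q r s = Q r 0 * Q s 1 - Q r 1 * Q s 0 := by
  simp only [mesonMatrix, su2Epsilon, mul_apply, transpose_apply, Fin.sum_univ_two, of_apply,
    cons_val', cons_val_zero, cons_val_one, cons_val_fin_one]
  ring

theorem su2_two_flavours_meson_general [Fintype ι] [CommRing R] [Nontrivial R]
    (Q : ι → Fin 2 → R) (hF : ∀ a b : Fin 2, ∑ r, Q r a * Q r b = 0)
    (V : Matrix ι ι R) (hV : ∀ r s, V r s = Q r 0 * Q s 1 - Q r 1 * Q s 0) :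
    Vᵀ = -V ∧ V * V = 0 ∧ V.rank ≤ 2 := by
  have hQ : (of Q)ᵀ * of Q = 0 := Matrix.ext hF
  obtain rfl : V = mesonMatrix (su2Epsilon R) (of Q) :=
    Matrix.ext fun r s => (hV r s).trans (mesonMatrix_su2Epsilon_apply (of Q) r s).symm
  refine ⟨?antisymmetric, ?squareZero, ?rankLe⟩
  case antisymmetric => rw [transpose_mesonMatrix, transpose_su2Epsilon, mesonMatrix_neg]
  case squareZero => exact mesonMatrix_mul_mesonMatrix_eq_zero hQ _ _
  case rankLe => exact rank_mesonMatrix_le_card _ _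

/-- The Higgs branch of SU(2) with 2 flavours: the F-terms ∑_r Q^r_a Q^r_b = 0 imply that
the meson matrix V^{rs} = ε^{ab} Q^r_a Q^s_b is antisymmetric, squares to zero,
and has rank at most 2. -/
theorem su2_two_flavours_meson (Q : Fin 4 → Fin 2 → ℂ)
    (hF : ∀ a b : Fin 2, ∑ r : Fin 4, Q r a * Q r b = 0)
    (V : Matrix (Fin 4) (Fin 4) ℂ)
    (hV : ∀ r s : Fin 4, V r s = Q r 0 * Q s 1 - Q r 1 * Q s 0) :
    Vᵀ = -V ∧ V * V = 0 ∧ V.rank ≤ 2 :=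
  su2_two_flavours_meson_general Q hF V hV
end

section
/- A 4×4 complex matrix V satisfies Vᵀ = −V and V * V = 0 if and only if there exist vectors p, q : Fin 4 → ℂ with ∑_r p r * p r = 0, ∑_r p r * q r = 0, ∑_r q r * q r = 0 such that V r s = p r * q s − q r * p s for all r, s. -/
/-!
Since `V * V = 0`, the range of `V` lies in its kernel, so in dimension at most `7` the rank of `V`
is at most `3` and all `4 × 4` minors vanish. A principal `4 × 4` minor of an alternating matrix is
the square of a Pfaffian, and the vanishing of these Pfaffians is the Plücker relation for `V`: it
makes `V` the wedge product of its `i`-th and `j`-th rows, divided by the entry `V i j ≠ 0`. By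
antisymmetry the dot products of rows of `V` are the entries of `-(V * V)`, so these rows form an
isotropic pair. Conversely, `(p ∧ q) * (p ∧ q)` is a combination of the dot products of `p` and `q`.
-/

open Matrix

section Alternating

variable {m n R : Type*} [CommRing R]

/-- Alternating matrices, the Gram matrices of alternating bilinear forms. The diagonal is required
to vanish because antisymmetry does not imply this in characteristic two. -/
structure IsAlternating (V : Matrix n n R) : Prop where
  apply_self (i : n) : V i i = 0
  apply_swap (i j : n) : V j i = -V i j

theorem isAlternating_iff_transpose_eq_neg [NoZeroDivisors R] [NeZero (2 : R)]
    {V : Matrix n n R} : IsAlternating V ↔ Vᵀ = -V := by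
  refine ⟨fun hV => Matrix.ext hV.apply_swap, fun hV => ?_⟩
  have hswap : ∀ i j, V j i = -V i j := fun i j => congrFun₂ hV i j
  refine ⟨fun i => ?_, hswap⟩
  have htwo : 2 * V i i = 0 := by linear_combination hswap i i
  exact (mul_eq_zero.mp htwo).resolve_left two_ne_zero

theorem IsAlternating.submatrix {V : Matrix n n R} (hV : IsAlternating V) (f : m → n) :
    IsAlternating (V.submatrix f f) :=
  ⟨fun i => hV.apply_self (f i), fun i j => hV.apply_swap (f i) (f j)⟩

theorem IsAlternating.det_fin_four {V : Matrix (Fin 4) (Fin 4) R} (hV : IsAlternating V) :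
    V.det = (V 0 1 * V 2 3 - V 0 2 * V 1 3 + V 0 3 * V 1 2) ^ 2 := by
  have hswap := hV.apply_swap
  simp only [det_succ_row_zero V, Fin.sum_univ_four, det_fin_three, submatrix_apply, Fin.succAbove,
    Fin.reduceSucc, Fin.reduceCastSucc, Fin.reduceLT, Fin.isValue, ↓reduceIte, Fin.coe_ofNat_eq_mod,
    hV.apply_self, hswap 0 1, hswap 0 2, hswap 0 3, hswap 1 2, hswap 1 3, hswap 2 3]
  ring

theorem IsAlternating.row_dotProduct_row [Fintype n] {V : Matrix n n R} (hV : IsAlternating V)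
    (i j : n) : V.row i ⬝ᵥ V.row j = -(V * V) i j := by
  simp only [dotProduct, row_apply, mul_apply, ← Finset.sum_neg_distrib, hV.apply_swap j, mul_neg,
    neg_neg]

end Alternating

section Wedge

variable {n R : Type*} [CommRing R]

/-- The wedge product `p ∧ q` of two vectors, encoded as the matrix `p qᵀ - q pᵀ`. -/
def wedge (p q : n → R) : Matrix n n R :=
  vecMulVec p q - vecMulVec q p

theorem wedge_apply (p q : n → R) (i j : n) : wedge p q i j = p i * q j - q i * p j :=
  rfl

theorem isAlternating_wedge (p q : n → R) : IsAlternating (wedge p q) where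
  apply_self i := by rw [wedge_apply]; ring
  apply_swap i j := by simp only [wedge_apply]; ring

theorem wedge_mul_wedge_self [Fintype n] (p q : n → R) :
    wedge p q * wedge p q = (p ⬝ᵥ q) • (vecMulVec p q + vecMulVec q p)
      - (q ⬝ᵥ q) • vecMulVec p p - (p ⬝ᵥ p) • vecMulVec q q := by
  simp only [wedge, sub_mul, mul_sub, vecMulVec_mul_vecMulVec, dotProduct_comm q p, vecMulVec_smul]
  module

end Wedge

section Rank

variable {m n R : Type*} [Fintype n] [CommRing R] [IsDomain R]

theorem det_submatrix_eq_zero_of_rank_lt {l : Type*} [Fintype l] [DecidableEq l]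
    (A : Matrix m n R) (r : l → m) (c : l → n) (hA : A.rank < Fintype.card l) :
    (A.submatrix r c).det = 0 := by
  by_contra hdet
  exact hA.not_ge (rank_of_det_ne_zero hdet ▸ rank_submatrix_le A r c)

theorem IsAlternating.plucker_of_rank_lt_four {V : Matrix n n R} (hV : IsAlternating V)
    (hrank : V.rank < 4) (i j k l : n) :
    V i j * V k l - V i k * V j l + V i l * V j k = 0 := by
  have hminor : (V.submatrix ![i, j, k, l] ![i, j, k, l]).det = 0 :=
    det_submatrix_eq_zero_of_rank_lt V _ _ (by simpa using hrank)
  rw [(hV.submatrix _).det_fin_four] at hminor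
  exact pow_eq_zero_iff two_ne_zero |>.mp hminor

end Rank

section Decomposability

variable {n K : Type*} [Fintype n] [Field K]

theorem IsAlternating.eq_wedge_rows_of_rank_lt_four {V : Matrix n n K} (hV : IsAlternating V)
    (hrank : V.rank < 4) {i j : n} (hij : V i j ≠ 0) :
    V = wedge ((V i j)⁻¹ • V.row i) (V.row j) := by
  ext r s
  have hplucker := hV.plucker_of_rank_lt_four hrank i j r s
  simp only [wedge_apply, Pi.smul_apply, row_apply, smul_eq_mul]
  field_simp
  linear_combination hplucker

theorem su2_higgs_branch_isotropic_pair_general (hn : Fintype.card n ≤ 7) (V : Matrix n n K) :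
    (IsAlternating V ∧ V * V = 0) ↔
      ∃ p q : n → K, p ⬝ᵥ p = 0 ∧ p ⬝ᵥ q = 0 ∧ q ⬝ᵥ q = 0 ∧ V = wedge p q := by
  constructor
  · rintro ⟨hV, hsq⟩
    obtain rfl | hne := eq_or_ne V 0
    · exact ⟨0, 0, by simp [wedge]⟩
    obtain ⟨i, j, hij⟩ : ∃ i j, V i j ≠ 0 := by
      by_contra! h
      exact hne (Matrix.ext h)
    have hrank : V.rank < 4 := by
      have hrank_add := rank_add_rank_le_card_of_mul_eq_zero hsq
      lia
    have hdot : ∀ a b, V.row a ⬝ᵥ V.row b = 0 := fun a b => by simp [hV.row_dotProduct_row, hsq]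
    exact ⟨(V i j)⁻¹ • V.row i, V.row j, by simp [hdot], by simp [hdot], hdot j j,
      hV.eq_wedge_rows_of_rank_lt_four hrank hij⟩
  · rintro ⟨p, q, hpp, hpq, hqq, rfl⟩
    exact ⟨isAlternating_wedge p q, by simp [wedge_mul_wedge_self, hpp, hpq, hqq]⟩

end Decomposability

/-- A 4×4 complex matrix V satisfies Vᵀ = −V and V² = 0 iff V = p ∧ q for an isotropic
pair of vectors p, q with respect to the standard symmetric bilinear dot product on ℂ⁴. -/
theorem su2_higgs_branch_isotropic_pair (V : Matrix (Fin 4) (Fin 4) ℂ) :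
    (Vᵀ = -V ∧ V * V = 0) ↔
      ∃ p q : Fin 4 → ℂ,
        (∑ r : Fin 4, p r * p r = 0) ∧
        (∑ r : Fin 4, p r * q r = 0) ∧
        (∑ r : Fin 4, q r * q r = 0) ∧
        ∀ r s : Fin 4, V r s = p r * q s - q r * p s := by
  simpa only [isAlternating_iff_transpose_eq_neg, ← Matrix.ext_iff, wedge_apply, dotProduct]
    using su2_higgs_branch_isotropic_pair_general (by simp) V
end

section
/- Let V be a 4×4 complex matrix with Vᵀ = −V and V * V = 0. Define the self-dual coordinates a₁ = V 0 1 + V 2 3, a₂ = V 0 2 − V 1 3, a₃ = V 0 3 + V 1 2 and the anti-self-dual coordinates b₁ = V 0 1 − V 2 3, b₂ = V 0 2 + V 1 3, b₃ = V 0 3 − V 1 2. Then a₁² + a₂² + a₃² = 0 and b₁² + b₂² + b₃² = 0. -/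
open Matrix

/-!
Splitting an antisymmetric `V` into its self-dual and anti-self-dual parts gives `2V = A + B`,
where, up to sign, `A` and `B` are left and right multiplication by imaginary quaternions `a` and
`b`. Hence `A` and `B` commute, `A² = -(a ⬝ a)`, `B² = -(b ⬝ b)` and `tr (AB) = 0`. If `V² = 0`, the
trace of `(A + B)²` gives `a ⬝ a + b ⬝ b = 0`; what is left of `(A + B)² = 0` is `2AB = 0`, so that
`(a ⬝ a)(b ⬝ b) = A²B² = 0`. In a reduced ring, two elements whose sum and product vanish are zero.
-/

theorem eq_zero_and_eq_zero_of_add_eq_zero_of_mul_eq_zero {R : Type*} [Ring R] [IsReduced R]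
    {x y : R} (hadd : x + y = 0) (hmul : x * y = 0) : x = 0 ∧ y = 0 := by
  obtain rfl : y = -x := eq_neg_of_add_eq_zero_right hadd
  have hx : x = 0 := by simpa [← sq] using hmul
  exact ⟨hx, by rw [hx, neg_zero]⟩

theorem mul_smul_one_eq_zero_of_mul_eq_zero {R S : Type*} [CommSemiring R] [Semiring S]
    [Algebra R S] {A B : S} {α β : R} (hcomm : Commute A B) (hA : A ^ 2 = α • 1)
    (hB : B ^ 2 = β • 1) (hAB : A * B = 0) : (α * β) • (1 : S) = 0 :=
  calc (α * β) • (1 : S) = A ^ 2 * B ^ 2 := by rw [hA, hB, smul_mul_smul_comm, one_mul]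
    _ = (A * B) ^ 2 := (hcomm.mul_pow 2).symm
    _ = 0 := by rw [hAB, zero_pow two_ne_zero]

section CommutingMatrices

variable {n R : Type*} [Fintype n] [DecidableEq n] [CommSemiring R] {A B : Matrix n n R}
  {α β : R}

theorem eq_zero_of_smul_one_eq_zero (hn : IsRegular (Fintype.card n : R))
    (h : α • (1 : Matrix n n R) = 0) : α = 0 := by
  have htr : α * Fintype.card n = 0 := by simpa using congrArg trace h
  exact hn.right.mul_right_eq_zero_iff.mp htr

theorem add_sq_eq_smul_one_add (hcomm : Commute A B) (hA : A ^ 2 = α • 1) (hB : B ^ 2 = β • 1) :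
    (A + B) ^ 2 = (α + β) • 1 + (2 : R) • (A * B) := by
  rw [hcomm.add_sq, hA, hB, add_smul, mul_assoc, two_mul, two_smul]
  abel

theorem add_eq_zero_of_add_sq_eq_zero (hn : IsRegular (Fintype.card n : R)) (hcomm : Commute A B)
    (hA : A ^ 2 = α • 1) (hB : B ^ 2 = β • 1) (htr : (A * B).trace = 0) (hsq : (A + B) ^ 2 = 0) :
    α + β = 0 := by
  have htr_sq := congrArg trace (add_sq_eq_smul_one_add hcomm hA hB)
  rw [hsq, trace_zero, trace_add, trace_smul, trace_smul, htr, trace_one, smul_zero, add_zero,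
    smul_eq_mul] at htr_sq
  exact hn.right.mul_right_eq_zero_iff.mp htr_sq.symm

end CommutingMatrices

theorem eq_zero_and_eq_zero_of_add_sq_eq_zero {n R : Type*} [Fintype n] [DecidableEq n]
    [CommRing R] [IsReduced R] {A B : Matrix n n R} {α β : R} (h2 : IsRegular (2 : R))
    (hn : IsRegular (Fintype.card n : R)) (hcomm : Commute A B) (hA : A ^ 2 = α • 1)
    (hB : B ^ 2 = β • 1) (htr : (A * B).trace = 0) (hsq : (A + B) ^ 2 = 0) : α = 0 ∧ β = 0 := by
  have hadd : α + β = 0 := add_eq_zero_of_add_sq_eq_zero hn hcomm hA hB htr hsq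
  have h2AB : (2 : R) • (A * B) = 0 := by
    rw [← hsq, add_sq_eq_smul_one_add hcomm hA hB, hadd, zero_smul, zero_add]
  have hAB : A * B = 0 := h2.left.isSMulRegular.matrix.right_eq_zero_of_smul h2AB
  exact eq_zero_and_eq_zero_of_add_eq_zero_of_mul_eq_zero hadd
    (eq_zero_of_smul_one_eq_zero hn (mul_smul_one_eq_zero_of_mul_eq_zero hcomm hA hB hAB))

section SelfDual

variable {R : Type*} [CommRing R]

/-- The self-dual antisymmetric matrix with entries `a` in the positions `(0,1)`, `(0,2)`, `(0,3)`.
It is left multiplication by the imaginary quaternion with coordinates `-a` in the basis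
`1, i, j, k`. -/
def selfDualMatrix (a : Fin 3 → R) : Matrix (Fin 4) (Fin 4) R :=
  !![0, a 0, a 1, a 2;
     -a 0, 0, a 2, -a 1;
     -a 1, -a 2, 0, a 0;
     -a 2, a 1, -a 0, 0]

/-- The anti-self-dual antisymmetric matrix with entries `b` in the positions `(0,1)`, `(0,2)`,
`(0,3)`. It is right multiplication by the imaginary quaternion with coordinates `-b` in the basis
`1, i, j, k`. -/
def antiSelfDualMatrix (b : Fin 3 → R) : Matrix (Fin 4) (Fin 4) R :=
  !![0, b 0, b 1, b 2;
     -b 0, 0, -b 2, b 1;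
     -b 1, b 2, 0, -b 0;
     -b 2, -b 1, b 0, 0]

/-- The triple `a(V)` of self-dual coordinates, normalized so that no division by `2` occurs: the
self-dual part of `2V` is `selfDualMatrix (selfDualTriple V)`. -/
def selfDualTriple (V : Matrix (Fin 4) (Fin 4) R) : Fin 3 → R :=
  ![V 0 1 + V 2 3, V 0 2 - V 1 3, V 0 3 + V 1 2]

/-- The triple `b(V)` of anti-self-dual coordinates, normalized so that no division by `2` occurs:
the anti-self-dual part of `2V` is `antiSelfDualMatrix (antiSelfDualTriple V)`. -/
def antiSelfDualTriple (V : Matrix (Fin 4) (Fin 4) R) : Fin 3 → R :=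
  ![V 0 1 - V 2 3, V 0 2 + V 1 3, V 0 3 - V 1 2]

theorem selfDualMatrix_sq (a : Fin 3 → R) : selfDualMatrix a ^ 2 = (-(a ⬝ᵥ a)) • 1 := by
  ext i j
  fin_cases i <;> fin_cases j <;>
    simp [selfDualMatrix, sq, mul_apply, Fin.sum_univ_four, vec3_dotProduct] <;> ring

theorem antiSelfDualMatrix_sq (b : Fin 3 → R) : antiSelfDualMatrix b ^ 2 = (-(b ⬝ᵥ b)) • 1 := by
  ext i j
  fin_cases i <;> fin_cases j <;>
    simp [antiSelfDualMatrix, sq, mul_apply, Fin.sum_univ_four, vec3_dotProduct] <;> ring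

theorem commute_selfDualMatrix_antiSelfDualMatrix (a b : Fin 3 → R) :
    Commute (selfDualMatrix a) (antiSelfDualMatrix b) := by
  ext i j
  fin_cases i <;> fin_cases j <;>
    simp [selfDualMatrix, antiSelfDualMatrix, mul_apply, Fin.sum_univ_four] <;> ring

theorem trace_selfDualMatrix_mul_antiSelfDualMatrix (a b : Fin 3 → R) :
    (selfDualMatrix a * antiSelfDualMatrix b).trace = 0 := by
  simp [trace, selfDualMatrix, antiSelfDualMatrix, Fin.sum_univ_four]
  ring

theorem selfDualMatrix_add_antiSelfDualMatrix {V : Matrix (Fin 4) (Fin 4) R} (hV : Vᵀ = -V) :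
    selfDualMatrix (selfDualTriple V) + antiSelfDualMatrix (antiSelfDualTriple V) =
      (2 : R) • V := by
  have antisymm (i j : Fin 4) : V j i = -V i j := congrFun (congrFun hV i) j
  ext i j
  fin_cases i <;> fin_cases j <;>
    simp [selfDualMatrix, antiSelfDualMatrix, selfDualTriple, antiSelfDualTriple] <;> grind

theorem dotProduct_self_eq_zero_of_add_sq_eq_zero [IsReduced R] (h2 : IsRegular (2 : R))
    {a b : Fin 3 → R} (hsq : (selfDualMatrix a + antiSelfDualMatrix b) ^ 2 = 0) :
    a ⬝ᵥ a = 0 ∧ b ⬝ᵥ b = 0 := by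
  have h4 : IsRegular (Fintype.card (Fin 4) : R) := by
    have hcard : (Fintype.card (Fin 4) : R) = 2 * 2 := by norm_num
    rw [hcard]
    exact h2.mul h2
  simpa only [neg_eq_zero] using eq_zero_and_eq_zero_of_add_sq_eq_zero h2 h4
    (commute_selfDualMatrix_antiSelfDualMatrix a b) (selfDualMatrix_sq a)
    (antiSelfDualMatrix_sq b) (trace_selfDualMatrix_mul_antiSelfDualMatrix a b) hsq

theorem self_dual_triples_null_general [IsReduced R] (h2 : IsRegular (2 : R))
    {V : Matrix (Fin 4) (Fin 4) R} (hV : Vᵀ = -V) (hsq : V * V = 0) :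
    (V 0 1 + V 2 3) ^ 2 + (V 0 2 - V 1 3) ^ 2 + (V 0 3 + V 1 2) ^ 2 = 0 ∧
    (V 0 1 - V 2 3) ^ 2 + (V 0 2 + V 1 3) ^ 2 + (V 0 3 - V 1 2) ^ 2 = 0 := by
  have hparts :
      (selfDualMatrix (selfDualTriple V) + antiSelfDualMatrix (antiSelfDualTriple V)) ^ 2 = 0 := by
    rw [selfDualMatrix_add_antiSelfDualMatrix hV, smul_pow, sq V, hsq, smul_zero]
  simpa [selfDualTriple, antiSelfDualTriple, vec3_dotProduct, ← sq, add_assoc] using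
    dotProduct_self_eq_zero_of_add_sq_eq_zero h2 hparts

end SelfDual

/-- For a 4×4 complex antisymmetric matrix with V² = 0, the self-dual triple and the
anti-self-dual triple each satisfy the null-quadric equation. -/
theorem self_dual_triples_null (V : Matrix (Fin 4) (Fin 4) ℂ)
    (h1 : Vᵀ = -V) (h2 : V * V = 0) :
    (V 0 1 + V 2 3) ^ 2 + (V 0 2 - V 1 3) ^ 2 + (V 0 3 + V 1 2) ^ 2 = 0 ∧
    (V 0 1 - V 2 3) ^ 2 + (V 0 2 + V 1 3) ^ 2 + (V 0 3 - V 1 2) ^ 2 = 0 :=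
  self_dual_triples_null_general (IsRegular.of_ne_zero two_ne_zero) h1 h2
end

section
/- Let V be a 4×4 complex matrix with Vᵀ = −V and V * V = 0. Define a₁ = V 0 1 + V 2 3, a₂ = V 0 2 − V 1 3, a₃ = V 0 3 + V 1 2 and b₁ = V 0 1 − V 2 3, b₂ = V 0 2 + V 1 3, b₃ = V 0 3 − V 1 2. Then aᵢ * bⱼ = 0 for all i, j ∈ {1, 2, 3}; in particular either (a₁,a₂,a₃) = 0 or (b₁,b₂,b₃) = 0. -/
open Matrix

/-!
An antisymmetric `V` satisfies `2V = S + T` with `S` self-dual and `T` anti-self-dual. Self-dual and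
anti-self-dual matrices commute and each multiply like imaginary quaternions, so `4V²` is a scalar
plus `2ST`. Under the trace form the scalar is orthogonal to every product of a self-dual and an
anti-self-dual matrix, so pairing `V² = 0` with the basis of such products reads off `aᵢ bⱼ = 0`.
-/

section CommRing

variable {R : Type*} [CommRing R]

theorem two_smul_eq_selfDualMatrix_add_antiSelfDualMatrix {V : Matrix (Fin 4) (Fin 4) R}
    (hV : Vᵀ = -V) :
    (2 : R) • V =
      selfDualMatrix (selfDualTriple V) + antiSelfDualMatrix (antiSelfDualTriple V) := by
  have hanti (i j : Fin 4) : V j i = -V i j := congr_fun₂ hV i j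
  ext i j
  fin_cases i <;> fin_cases j <;>
    simp only [selfDualMatrix, antiSelfDualMatrix, selfDualTriple, antiSelfDualTriple,
      Matrix.add_apply, Matrix.smul_apply, smul_eq_mul, Fin.zero_eta, Fin.mk_one, Fin.reduceFinMk,
      of_apply, cons_val', cons_val, cons_val_fin_one] <;>
    grind

@[simp]
theorem selfDualMatrix_zero : selfDualMatrix (0 : Fin 3 → R) = 0 := by
  ext i j
  fin_cases i <;> fin_cases j <;> simp [selfDualMatrix]

@[simp]
theorem antiSelfDualMatrix_zero : antiSelfDualMatrix (0 : Fin 3 → R) = 0 := by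
  ext i j
  fin_cases i <;> fin_cases j <;> simp [antiSelfDualMatrix]

theorem selfDualMatrix_mul_selfDualMatrix (a c : Fin 3 → R) :
    selfDualMatrix a * selfDualMatrix c = -(a ⬝ᵥ c) • 1 - selfDualMatrix (a ⨯₃ c) := by
  ext i j
  fin_cases i <;> fin_cases j <;>
    simp only [selfDualMatrix, cross_apply, vec3_dotProduct, mul_apply, Fin.sum_univ_four,
      Matrix.sub_apply, Matrix.smul_apply, smul_eq_mul, one_apply, Fin.reduceEq, reduceIte,
      Fin.zero_eta, Fin.mk_one, Fin.reduceFinMk, of_apply, cons_val', cons_val,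
      cons_val_fin_one] <;>
    ring

theorem antiSelfDualMatrix_mul_antiSelfDualMatrix (b d : Fin 3 → R) :
    antiSelfDualMatrix b * antiSelfDualMatrix d =
      -(b ⬝ᵥ d) • 1 + antiSelfDualMatrix (b ⨯₃ d) := by
  ext i j
  fin_cases i <;> fin_cases j <;>
    simp only [antiSelfDualMatrix, cross_apply, vec3_dotProduct, mul_apply, Fin.sum_univ_four,
      Matrix.add_apply, Matrix.smul_apply, smul_eq_mul, one_apply, Fin.reduceEq, reduceIte,
      Fin.zero_eta, Fin.mk_one, Fin.reduceFinMk, of_apply, cons_val', cons_val,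
      cons_val_fin_one] <;>
    ring

theorem trace_selfDualMatrix (a : Fin 3 → R) : (selfDualMatrix a).trace = 0 := by
  simp [selfDualMatrix, trace, Fin.sum_univ_succ]

theorem trace_antiSelfDualMatrix (b : Fin 3 → R) : (antiSelfDualMatrix b).trace = 0 := by
  simp [antiSelfDualMatrix, trace, Fin.sum_univ_succ]

theorem trace_selfDualMatrix_mul_mul_antiSelfDualMatrix_mul (a b c d : Fin 3 → R) :
    (selfDualMatrix c * selfDualMatrix a * (antiSelfDualMatrix b * antiSelfDualMatrix d)).trace =
      4 * ((c ⬝ᵥ a) * (b ⬝ᵥ d)) := by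
  simp only [selfDualMatrix_mul_selfDualMatrix, antiSelfDualMatrix_mul_antiSelfDualMatrix,
    sub_mul, mul_add, smul_mul_assoc, mul_smul_comm, one_mul, mul_one, trace_add, trace_sub,
    trace_smul, trace_one, trace_selfDualMatrix, trace_antiSelfDualMatrix,
    trace_selfDualMatrix_mul_antiSelfDualMatrix, Fintype.card_fin, smul_eq_mul]
  push_cast
  ring

theorem selfDualMatrix_add_antiSelfDualMatrix_mul_self (a b : Fin 3 → R) :
    (selfDualMatrix a + antiSelfDualMatrix b) * (selfDualMatrix a + antiSelfDualMatrix b) =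
      -(a ⬝ᵥ a + b ⬝ᵥ b) • 1 + (2 : R) • (selfDualMatrix a * antiSelfDualMatrix b) := by
  rw [add_mul, mul_add, mul_add, ← (commute_selfDualMatrix_antiSelfDualMatrix a b).eq,
    selfDualMatrix_mul_selfDualMatrix, antiSelfDualMatrix_mul_antiSelfDualMatrix, cross_self,
    cross_self, selfDualMatrix_zero, antiSelfDualMatrix_zero]
  module

theorem trace_selfDualMatrix_mul_add_mul_self_mul_antiSelfDualMatrix (a b c d : Fin 3 → R) :
    (selfDualMatrix c *
        ((selfDualMatrix a + antiSelfDualMatrix b) * (selfDualMatrix a + antiSelfDualMatrix b)) *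
      antiSelfDualMatrix d).trace = 8 * ((c ⬝ᵥ a) * (b ⬝ᵥ d)) := by
  have hassoc : selfDualMatrix c * (selfDualMatrix a * antiSelfDualMatrix b) *
      antiSelfDualMatrix d =
        selfDualMatrix c * selfDualMatrix a * (antiSelfDualMatrix b * antiSelfDualMatrix d) := by
    simp only [mul_assoc]
  rw [selfDualMatrix_add_antiSelfDualMatrix_mul_self, mul_add, add_mul, mul_smul_comm,
    mul_smul_comm, mul_one, smul_mul_assoc, smul_mul_assoc, hassoc, trace_add, trace_smul,
    trace_smul, trace_selfDualMatrix_mul_antiSelfDualMatrix,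
    trace_selfDualMatrix_mul_mul_antiSelfDualMatrix_mul, smul_eq_mul, smul_eq_mul]
  ring

theorem vecMulVec_selfDualTriple_antiSelfDualTriple_eq_zero (h2 : IsLeftRegular (2 : R))
    {V : Matrix (Fin 4) (Fin 4) R} (hV : Vᵀ = -V) (hVV : V * V = 0) :
    vecMulVec (selfDualTriple V) (antiSelfDualTriple V) = 0 := by
  ext i j
  have htrace := trace_selfDualMatrix_mul_add_mul_self_mul_antiSelfDualMatrix (selfDualTriple V)
    (antiSelfDualTriple V) (Pi.single i 1) (Pi.single j 1)
  rw [← two_smul_eq_selfDualMatrix_add_antiSelfDualMatrix hV, smul_mul_smul_comm, hVV, smul_zero,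
    mul_zero, zero_mul, trace_zero, single_one_dotProduct, dotProduct_single_one] at htrace
  refine (h2.pow 3).mul_left_eq_zero_iff.mp ?_
  rw [vecMulVec_apply]
  linear_combination -htrace

end CommRing

theorem self_dual_times_anti_self_dual_zero_general {R : Type*} [CommRing R] [NoZeroDivisors R]
    [NeZero (2 : R)] (V : Matrix (Fin 4) (Fin 4) R) (hV : Vᵀ = -V) (hVV : V * V = 0) :
    (∀ i j : Fin 3, selfDualTriple V i * antiSelfDualTriple V j = 0) ∧
      (selfDualTriple V = 0 ∨ antiSelfDualTriple V = 0) := by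
  have hab : vecMulVec (selfDualTriple V) (antiSelfDualTriple V) = 0 :=
    vecMulVec_selfDualTriple_antiSelfDualTriple_eq_zero
      (IsRegular.of_ne_zero two_ne_zero).left hV hVV
  exact ⟨fun i j => congr_fun₂ hab i j, vecMulVec_eq_zero.mp hab⟩

/-- For a 4×4 complex antisymmetric matrix with V² = 0, the self-dual triple a(V) and the
anti-self-dual triple b(V) satisfy aᵢ bⱼ = 0 for all i, j; in particular a(V) = 0 or
b(V) = 0. -/
theorem self_dual_times_anti_self_dual_zero (V : Matrix (Fin 4) (Fin 4) ℂ)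
    (h1 : Vᵀ = -V) (h2 : V * V = 0) :
    (∀ i j : Fin 3,
      ![V 0 1 + V 2 3, V 0 2 - V 1 3, V 0 3 + V 1 2] i *
        ![V 0 1 - V 2 3, V 0 2 + V 1 3, V 0 3 - V 1 2] j = 0) ∧
    (![V 0 1 + V 2 3, V 0 2 - V 1 3, V 0 3 + V 1 2] = 0 ∨
      ![V 0 1 - V 2 3, V 0 2 + V 1 3, V 0 3 - V 1 2] = 0) :=
  self_dual_times_anti_self_dual_zero_general V h1 h2
end

section
/- Let k, N be positive integers and let M be an N×N complex matrix with Mᵀ = −M, M * M = 0 and rank M ≤ 2k. Then there exists an N×2k complex matrix Q with Qᵀ * Q = 0 and M = Q * J * Qᵀ, where J = [[0, I_k], [−I_k, 0]] is the standard 2k×2k symplectic matrix. -/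
open Matrix

/-- The standard 2k×2k symplectic matrix J = [[0, I_k], [−I_k, 0]] over ℂ. -/
def symplecticJ (k : ℕ) : Matrix (Fin k ⊕ Fin k) (Fin k ⊕ Fin k) ℂ :=
  Matrix.fromBlocks 0 1 (-1) 0

/-!
If `M` is alternating and `x ⬝ᵥ M *ᵥ y = 1`, then subtracting the elementary alternating matrix
`(M x) (M y)ᵀ - (M y) (M x)ᵀ` from `M` leaves an alternating matrix whose range is contained in
that of `M` and orthogonal to `x` and `y`, so the rank drops by two. Iterating, an alternating
matrix of rank at most `2k` is a sum of `k` elementary ones built from vectors in its range; with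
these vectors as the columns of `Q`, this says `M = Q J Qᵀ`. Since
`(M a) ⬝ᵥ (M b) = -(a ⬝ᵥ M² b)`, the range of `M` is totally isotropic when `M² = 0`, whence
`Qᵀ Q = 0`.
-/

section CommRing

variable {n ι R : Type*} [CommRing R]

/-- The elementary alternating matrix `u vᵀ - v uᵀ`, representing the bivector `u ∧ v`; sums of `k`
of these are the matrices `Q J Qᵀ`. -/
def vecWedge (u v : n → R) : Matrix n n R :=
  vecMulVec u v - vecMulVec v u

theorem sum_vecWedge_col [Fintype ι] [DecidableEq ι] (P Q : Matrix n ι R) :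
    ∑ i, vecWedge (P.col i) (Q.col i) =
      fromCols P Q * (fromBlocks 0 1 (-1) 0 : Matrix (ι ⊕ ι) (ι ⊕ ι) R) * (fromCols P Q)ᵀ := by
  have sum_eq : ∑ i, vecWedge (P.col i) (Q.col i) = P * Qᵀ - Q * Pᵀ := by
    ext r s
    simp [vecWedge, vecMulVec_apply, Matrix.sum_apply, mul_apply]
  rw [sum_eq, transpose_fromCols, fromCols_mul_fromBlocks, fromCols_mul_fromRows]
  simp [sub_eq_neg_add]

variable [Fintype n]

theorem vecWedge_mulVec (u v z : n → R) :
    vecWedge u v *ᵥ z = (v ⬝ᵥ z) • u - (u ⬝ᵥ z) • v := by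
  simp only [vecWedge, sub_mulVec, vecMulVec_mulVec, op_smul_eq_smul]

variable [DecidableEq n] {M : Matrix n n R}

theorem isAlt_toBilin'_vecWedge (u v : n → R) : (toBilin' (vecWedge u v)).IsAlt := by
  intro z
  rw [toBilin'_apply', vecWedge_mulVec, dotProduct_sub, dotProduct_smul, dotProduct_smul,
    dotProduct_comm z, dotProduct_comm z, smul_eq_mul, smul_eq_mul, mul_comm, sub_self]

theorem isAlt_toBilin'_of_transpose_eq_neg [IsAddTorsionFree R] (hM : Mᵀ = -M) :
    (toBilin' M).IsAlt := by
  intro x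
  rw [toBilin'_apply', ← self_eq_neg]
  calc x ⬝ᵥ M *ᵥ x = x ⬝ᵥ Mᵀ *ᵥ x := (dotProduct_transpose_mulVec M x x).symm
    _ = -(x ⬝ᵥ M *ᵥ x) := by rw [hM, neg_mulVec, dotProduct_neg]

theorem dotProduct_mulVec_self_of_isAlt (hM : (toBilin' M).IsAlt) (x : n → R) :
    x ⬝ᵥ M *ᵥ x = 0 := by
  simpa only [toBilin'_apply'] using hM x

theorem mulVec_dotProduct_of_isAlt (hM : (toBilin' M).IsAlt) (x z : n → R) :
    M *ᵥ x ⬝ᵥ z = -(x ⬝ᵥ M *ᵥ z) := by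
  simpa only [toBilin'_apply', dotProduct_comm z] using (hM.neg_eq x z).symm

theorem transpose_mul_self_eq_zero_of_isAlt (hM : (toBilin' M).IsAlt) (hsq : M * M = 0)
    (A : Matrix n ι R) : (M * A)ᵀ * (M * A) = 0 := by
  ext i j
  change M *ᵥ A.col i ⬝ᵥ M *ᵥ A.col j = 0
  rw [mulVec_dotProduct_of_isAlt hM, mulVec_mulVec, hsq, zero_mulVec, dotProduct_zero, neg_zero]

theorem sub_vecWedge_mulVec_eq_mul (M : Matrix n n R) (x y : n → R) :
    M - vecWedge (M *ᵥ x) (M *ᵥ y) =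
      M * (1 - (vecMulVec x (M *ᵥ y) - vecMulVec y (M *ᵥ x))) := by
  simp only [vecWedge, mul_sub, mul_one, mul_vecMulVec]

theorem range_sub_vecWedge_mulVec_le (hM : (toBilin' M).IsAlt) {x y : n → R}
    (hxy : x ⬝ᵥ M *ᵥ y = 1) :
    LinearMap.range (M - vecWedge (M *ᵥ x) (M *ᵥ y)).mulVecLin ≤
      LinearMap.range M.mulVecLin ⊓ LinearMap.ker (dotProductBilin R R x) ⊓
        LinearMap.ker (dotProductBilin R R y) := by
  have hyx : y ⬝ᵥ M *ᵥ x = -1 := by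
    rw [dotProduct_comm, mulVec_dotProduct_of_isAlt hM, hxy]
  rintro _ ⟨z, rfl⟩
  have hz : (M - vecWedge (M *ᵥ x) (M *ᵥ y)) *ᵥ z =
      M *ᵥ z + (y ⬝ᵥ M *ᵥ z) • M *ᵥ x - (x ⬝ᵥ M *ᵥ z) • M *ᵥ y := by
    rw [sub_mulVec, vecWedge_mulVec, mulVec_dotProduct_of_isAlt hM, mulVec_dotProduct_of_isAlt hM]
    module
  refine ⟨⟨?_, ?_⟩, ?_⟩
  · rw [sub_vecWedge_mulVec_eq_mul, mulVecLin_mul]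
    exact LinearMap.mem_range_self _ _
  · change x ⬝ᵥ _ *ᵥ z = 0
    rw [hz]
    simp [dotProduct_mulVec_self_of_isAlt hM, hxy]
  · change y ⬝ᵥ _ *ᵥ z = 0
    rw [hz]
    simp [dotProduct_mulVec_self_of_isAlt hM, hyx]

end CommRing

theorem finrank_inf_ker_lt {K V V' : Type*} [DivisionRing K] [AddCommGroup V] [Module K V]
    [AddCommGroup V'] [Module K V'] {W : Submodule K V} [FiniteDimensional K W] {f : V →ₗ[K] V'}
    {v : V} (hv : v ∈ W) (hf : f v ≠ 0) :
    Module.finrank K ↥(W ⊓ LinearMap.ker f) < Module.finrank K W :=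
  Submodule.finrank_lt_finrank_of_lt (inf_lt_left.mpr fun hle => hf (hle hv))

theorem exists_dotProduct_mulVec_eq_one {m n K : Type*} [Fintype m] [Fintype n] [Field K]
    {M : Matrix m n K} (hM : M ≠ 0) : ∃ (x : m → K) (y : n → K), x ⬝ᵥ M *ᵥ y = 1 := by
  classical
  obtain ⟨i, j, hij⟩ : ∃ i j, M i j ≠ 0 := by
    by_contra! h
    exact hM (Matrix.ext h)
  exact ⟨Pi.single i (M i j)⁻¹, Pi.single j 1, by simp [hij]⟩

section Field

variable {n K : Type*} [Fintype n] [DecidableEq n] [Field K] {M : Matrix n n K}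

theorem rank_sub_vecWedge_mulVec_add_two_le (hM : (toBilin' M).IsAlt) {x y : n → K}
    (hxy : x ⬝ᵥ M *ᵥ y = 1) :
    (M - vecWedge (M *ᵥ x) (M *ᵥ y)).rank + 2 ≤ M.rank := by
  set W := LinearMap.range M.mulVecLin
  set W₁ := W ⊓ LinearMap.ker (dotProductBilin K K x)
  set W₂ := W₁ ⊓ LinearMap.ker (dotProductBilin K K y)
  have hW₁ : Module.finrank K W₁ < Module.finrank K W :=
    finrank_inf_ker_lt (v := M *ᵥ y) ⟨y, rfl⟩ (by simp [hxy])
  have hW₂ : Module.finrank K W₂ < Module.finrank K W₁ := by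
    refine finrank_inf_ker_lt (v := M *ᵥ x)
      ⟨⟨x, rfl⟩, dotProduct_mulVec_self_of_isAlt hM x⟩ ?_
    simp [dotProduct_comm y, mulVec_dotProduct_of_isAlt hM, hxy]
  have hle : (M - vecWedge (M *ᵥ x) (M *ᵥ y)).rank ≤ Module.finrank K W₂ :=
    Submodule.finrank_mono (range_sub_vecWedge_mulVec_le hM hxy)
  have hW : M.rank = Module.finrank K W := rfl
  lia

theorem exists_eq_sum_vecWedge_mulVec {k : ℕ} (hM : (toBilin' M).IsAlt) (hrank : M.rank ≤ 2 * k) :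
    ∃ x y : Fin k → n → K, M = ∑ l, vecWedge (M *ᵥ x l) (M *ᵥ y l) := by
  induction k generalizing M with
  | zero =>
    suffices M = 0 from ⟨0, 0, by simpa⟩
    by_contra hne
    obtain ⟨x, y, hxy⟩ := exists_dotProduct_mulVec_eq_one hne
    have := rank_sub_vecWedge_mulVec_add_two_le hM hxy
    lia
  | succ k ih =>
    rcases eq_or_ne M 0 with rfl | hne
    · exact ⟨0, 0, by simp [vecWedge]⟩
    obtain ⟨x, y, hxy⟩ := exists_dotProduct_mulVec_eq_one hne
    set M' := M - vecWedge (M *ᵥ x) (M *ᵥ y) with hM'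
    have hrank' := rank_sub_vecWedge_mulVec_add_two_le hM hxy
    have halt' : (toBilin' M').IsAlt := by
      rw [hM', map_sub]
      exact hM.sub (isAlt_toBilin'_vecWedge _ _)
    obtain ⟨xs, ys, hsum⟩ := ih halt' (by lia)
    obtain ⟨C, hC⟩ : ∃ C, M' = M * C := ⟨_, sub_vecWedge_mulVec_eq_mul M x y⟩
    refine ⟨Fin.cons x fun l => C *ᵥ xs l, Fin.cons y fun l => C *ᵥ ys l, ?_⟩
    simp only [Fin.sum_univ_succ, Fin.cons_zero, Fin.cons_succ, mulVec_mulVec, ← hC, ← hsum]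
    rw [hM', add_sub_cancel]

theorem spk_meson_surjective_general {k : ℕ} (hM : (toBilin' M).IsAlt) (hsq : M * M = 0)
    (hrank : M.rank ≤ 2 * k) :
    ∃ Q : Matrix n (Fin k ⊕ Fin k) K, Qᵀ * Q = 0 ∧
      M = Q * (fromBlocks 0 1 (-1) 0 : Matrix (Fin k ⊕ Fin k) (Fin k ⊕ Fin k) K) * Qᵀ := by
  obtain ⟨x, y, hsum⟩ := exists_eq_sum_vecWedge_mulVec hM hrank
  let A : Matrix n (Fin k) K := (of x)ᵀ
  let B : Matrix n (Fin k) K := (of y)ᵀ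
  refine ⟨M * fromCols A B, transpose_mul_self_eq_zero_of_isAlt hM hsq _, ?_⟩
  rw [mul_fromCols, ← sum_vecWedge_col]
  exact hsum

end Field

/-- Converse F-term analysis for Sp(k) with SO(N) flavour symmetry: every antisymmetric
N×N complex matrix M with M² = 0 and rank M ≤ 2k arises as the meson M = Q J Qᵀ of some
F-flat N×2k matrix Q (i.e. QᵀQ = 0). -/
theorem spk_meson_surjective (k N : ℕ) (hk : 0 < k) (hN : 0 < N)
    (M : Matrix (Fin N) (Fin N) ℂ) (h1 : Mᵀ = -M) (h2 : M * M = 0)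
    (h3 : M.rank ≤ 2 * k) :
    ∃ Q : Matrix (Fin N) (Fin k ⊕ Fin k) ℂ,
      Qᵀ * Q = 0 ∧ M = Q * symplecticJ k * Qᵀ :=
  spk_meson_surjective_general (isAlt_toBilin'_of_transpose_eq_neg h1) h2 h3
end

section
/- Let k, N be positive integers and M an N×N complex matrix. Then (trace M = 0 and M * M = 0 and rank M ≤ k) if and only if there exist complex matrices Q of size N×k and Q̃ of size k×N with Q̃ * Q = 0 and M = Q * Q̃. -/
open Matrix

/-!
A matrix `M` of rank at most `k` has a generalized inverse `A B`, that is `M A B M = M`, factoring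
through `k` dimensions: embed the range of `M` there, let `B` extend this embedding to the whole
space, and let `A` be a retraction onto the range followed by a section of `M`. Then `Q = M A` and
`Q̃ = B M` satisfy `Q Q̃ = M`, and `M² = 0` gives the F-term `Q̃ Q = B M² A = 0`. An arbitrary
factorization through `k` dimensions would not do: where `k` exceeds the rank of `M`, its factors
need not satisfy the F-term.
-/

section LinearMaps

variable {K U V W : Type*} [DivisionRing K] [AddCommGroup U] [Module K U]
  [AddCommGroup V] [Module K V] [AddCommGroup W] [Module K W]

lemma exists_comp_comp_comp_eq_self_of_injective (f : V →ₗ[K] W) (i : f.range →ₗ[K] U)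
    (hi : Function.Injective i) :
    ∃ (a : U →ₗ[K] V) (b : W →ₗ[K] U), (f ∘ₗ a) ∘ₗ (b ∘ₗ f) = f := by
  obtain ⟨p, hpi⟩ := i.exists_leftInverse_of_injective (LinearMap.ker_eq_bot.mpr hi)
  obtain ⟨s, hs⟩ := f.rangeRestrict.exists_rightInverse_of_surjective f.range_rangeRestrict
  obtain ⟨b, hb⟩ := i.exists_extend
  refine ⟨s ∘ₗ p, b, ?_⟩
  have hfs : f ∘ₗ s = f.range.subtype := congrArg (f.range.subtype ∘ₗ ·) hs
  have hbf : b ∘ₗ f = i ∘ₗ f.rangeRestrict := congrArg (· ∘ₗ f.rangeRestrict) hb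
  calc (f ∘ₗ s ∘ₗ p) ∘ₗ (b ∘ₗ f)
      = (f ∘ₗ s) ∘ₗ (p ∘ₗ i) ∘ₗ f.rangeRestrict := by rw [hbf]; rfl
    _ = f := by rw [hfs, hpi]; rfl

end LinearMaps

section Matrices

variable {K κ m n : Type*} [Field K] [Fintype κ] [Fintype m] [Fintype n]

lemma exists_mul_mul_mul_eq_self_of_rank_le (M : Matrix m n K)
    (hM : M.rank ≤ Fintype.card κ) :
    ∃ (A : Matrix n κ K) (B : Matrix κ m K), (M * A) * (B * M) = M := by
  classical
  obtain ⟨i, hi⟩ : ∃ i : M.toLin'.range →ₗ[K] (κ → K), Function.Injective i := by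
    rw [← finrank_le_iff_exists_linearMap, Module.finrank_fintype_fun_eq_card]
    exact hM
  obtain ⟨a, b, hab⟩ := exists_comp_comp_comp_eq_self_of_injective M.toLin' i hi
  refine ⟨a.toMatrix', b.toMatrix', toLin'.injective ?_⟩
  simpa only [toLin'_mul, toLin'_toMatrix'] using hab

lemma trace_eq_zero_of_mul_self_eq_zero {R : Type*} [CommRing R] [IsReduced R]
    {M : Matrix n n R} (hM : M * M = 0) : M.trace = 0 := by
  classical
  exact (isNilpotent_trace_of_isNilpotent ⟨2, (sq M).trans hM⟩).eq_zero

theorem uk_higgs_branch_variety_general (M : Matrix n n K) :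
    (M * M = 0 ∧ M.rank ≤ Fintype.card κ) ↔
      ∃ (Q : Matrix n κ K) (Qt : Matrix κ n K), Qt * Q = 0 ∧ M = Q * Qt := by
  constructor
  · rintro ⟨hsq, hrank⟩
    obtain ⟨A, B, hAB⟩ := exists_mul_mul_mul_eq_self_of_rank_le M hrank
    refine ⟨M * A, B * M, ?_, hAB.symm⟩
    calc B * M * (M * A) = B * (M * M) * A := by simp only [Matrix.mul_assoc]
      _ = 0 := by rw [hsq, Matrix.mul_zero, Matrix.zero_mul]
  · rintro ⟨Q, Qt, hF, rfl⟩
    constructor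
    · calc Q * Qt * (Q * Qt) = Q * (Qt * Q) * Qt := by simp only [Matrix.mul_assoc]
        _ = 0 := by rw [hF, Matrix.mul_zero, Matrix.zero_mul]
    · exact (rank_mul_le_left Q Qt).trans Q.rank_le_card_width

end Matrices

/-- Higgs branch of U(k) with N fundamental flavours: an N×N complex matrix M satisfies
Tr M = 0, M² = 0 and rank M ≤ k iff M = Q Q̃ for half-hypermultiplet matrices Q (N×k) and
Q̃ (k×N) satisfying the F-term Q̃ Q = 0. -/
theorem uk_higgs_branch_variety (k N : ℕ) (hk : 0 < k) (hN : 0 < N)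
    (M : Matrix (Fin N) (Fin N) ℂ) :
    (M.trace = 0 ∧ M * M = 0 ∧ M.rank ≤ k) ↔
      ∃ (Q : Matrix (Fin N) (Fin k) ℂ) (Qt : Matrix (Fin k) (Fin N) ℂ),
        Qt * Q = 0 ∧ M = Q * Qt := by
  rw [← uk_higgs_branch_variety_general, Fintype.card_fin]
  exact and_iff_right_of_imp fun h => trace_eq_zero_of_mul_self_eq_zero h.1
end

section
/- Let k, N be positive integers, let Ω = [[0, I_N], [−I_N, 0]] be the standard 2N×2N symplectic matrix over ℂ, and let M be a 2N×2N complex matrix. Then (Mᵀ = M and M * Ω * M = 0 and rank M ≤ k) if and only if there exists a 2N×k complex matrix Q with Qᵀ * Ω * Q = 0 and M = Q * Qᵀ. -/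
/-!
A symmetric matrix `M` of rank `r` over a field in which `2` is invertible and every element is a
square factors as `M = A Aᵀ` with `A` having only `r` columns: diagonalise `M` by a congruence,
take square roots of the diagonal entries and drop the vanishing columns. Such an `A` has full
column rank, so it can be cancelled on both sides of `M J M = A (Aᵀ J A) Aᵀ = 0`, whatever `J` is.
Padding `A` by zero columns gives the matrix `Q`.
-/

open Matrix

/-- The standard 2N×2N symplectic matrix Ω = [[0, I_N], [−I_N, 0]] over ℂ. -/
def symplecticOmega (N : ℕ) : Matrix (Fin N ⊕ Fin N) (Fin N ⊕ Fin N) ℂ :=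
  Matrix.fromBlocks 0 1 (-1) 0

section FullColumnRank

variable {m n K : Type*} [Fintype n] [Field K]

lemma exists_mul_eq_one_of_rank_eq_card [Fintype m] [DecidableEq n] {A : Matrix m n K}
    (hA : A.rank = Fintype.card n) : ∃ L : Matrix n m K, L * A = 1 := by
  have hrange : Aᵀ.mulVecLin.range = ⊤ := by
    apply Submodule.eq_top_of_finrank_eq
    rw [Module.finrank_fintype_fun_eq_card, ← hA, ← rank_transpose A, rank]
  have hsurj : Function.Surjective Aᵀ.mulVecLin := LinearMap.range_eq_top.1 hrange
  refine vecMul_surjective_iff_exists_left_inverse.1 fun y ↦ ?_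
  simpa only [mulVecLin_apply, mulVec_transpose] using hsurj y

lemma eq_zero_of_mul_mul_transpose_eq_zero [Finite m] {A : Matrix m n K} {X : Matrix n n K}
    (hA : A.rank = Fintype.card n) (h : A * X * Aᵀ = 0) : X = 0 := by
  classical
  cases nonempty_fintype m
  obtain ⟨L, hL⟩ := exists_mul_eq_one_of_rank_eq_card hA
  calc
    X = (L * A) * X * (L * A)ᵀ := by rw [hL, transpose_one, Matrix.one_mul, Matrix.mul_one]
    _ = L * (A * X * Aᵀ) * Lᵀ := by simp only [transpose_mul, Matrix.mul_assoc]
    _ = 0 := by rw [h, Matrix.mul_zero, Matrix.zero_mul]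

lemma transpose_mul_mul_eq_zero_of_rank_eq_card [Fintype m]
    {A : Matrix m n K} {J : Matrix m m K}
    (hrank : (A * Aᵀ).rank = Fintype.card n) (h : A * Aᵀ * J * (A * Aᵀ) = 0) :
    Aᵀ * J * A = 0 := by
  have hA : A.rank = Fintype.card n :=
    le_antisymm A.rank_le_card_width (hrank ▸ rank_mul_le_left A Aᵀ)
  exact eq_zero_of_mul_mul_transpose_eq_zero hA (by simpa only [Matrix.mul_assoc] using h)

end FullColumnRank

lemma exists_mul_transpose_eq_one {m n R : Type*} [Fintype m] [Fintype n] [DecidableEq m]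
    [NonAssocSemiring R] (h : Fintype.card m ≤ Fintype.card n) :
    ∃ S : Matrix m n R, S * Sᵀ = 1 := by
  classical
  obtain ⟨f⟩ : Nonempty (m ↪ n) := Function.Embedding.nonempty_of_card_le h
  refine ⟨(1 : Matrix n n R).submatrix f id, ?_⟩
  rw [transpose_submatrix, transpose_one, ← submatrix_mul _ _ f id f Function.bijective_id,
    Matrix.mul_one, submatrix_one_embedding]

section SymmetricFactorization

variable {m K : Type*} [Fintype m] [Field K]

lemma exists_eq_mul_diagonal_mul_transpose_of_isSymm [DecidableEq m] [Invertible (2 : K)]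
    {M : Matrix m m K} (hM : M.IsSymm) :
    ∃ (P : Matrix m m K) (d : m → K), IsUnit P.det ∧ M = P * diagonal d * Pᵀ := by
  obtain ⟨v₀, hv₀⟩ := LinearMap.BilinForm.exists_orthogonal_basis
    (LinearMap.BilinForm.isSymm_iff.1 (isSymm_toBilin'_iff_isSymm.2 hM))
  let σ : Fin (Module.finrank K (m → K)) ≃ m := Fintype.equivOfCardEq (by simp)
  let v : Module.Basis m K (m → K) := v₀.reindex σ
  let b : Module.Basis m K (m → K) := Pi.basisFun K m
  have hv : LinearMap.BilinForm.toMatrix v M.toBilin' =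
      diagonal fun i ↦ M.toBilin' (v i) (v i) := by
    ext i j
    rw [LinearMap.BilinForm.toMatrix_apply, diagonal_apply]
    split_ifs with hij
    · rw [hij]
    · simpa [v] using hv₀ (σ.symm.injective.ne hij)
  refine ⟨(v.toMatrix b)ᵀ, fun i ↦ M.toBilin' (v i) (v i), ?_, ?_⟩
  · rw [det_transpose]
    exact isUnit_det_of_right_inverse (v.toMatrix_mul_toMatrix_flip b)
  · rw [← hv, transpose_transpose, LinearMap.BilinForm.toMatrix_mul_basis_toMatrix,
      LinearMap.BilinForm.toMatrix_basisFun, LinearMap.BilinForm.toMatrix'_toBilin']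

lemma exists_diagonal_eq_mul_transpose [DecidableEq m] [DecidableEq K] {d : m → K}
    (hd : ∀ i, IsSquare (d i)) :
    ∃ A : Matrix m {i // d i ≠ 0} K, diagonal d = A * Aᵀ := by
  choose e he using hd
  refine ⟨(diagonal e).submatrix id Subtype.val, ?_⟩
  ext i j
  by_cases hi : d i = 0
  · have hei : e i = 0 := by simpa [hi] using he i
    simp [mul_apply, diagonal_apply, hi, hei]
  · rw [mul_apply, Fintype.sum_eq_single ⟨i, hi⟩]
    · rcases eq_or_ne i j with rfl | hij
      · simp [he]
      · simp [hij, hij.symm]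
    · intro x hx
      have hix : i ≠ x := fun h ↦ hx (Subtype.ext h.symm)
      simp [hix]

lemma exists_eq_mul_transpose_of_isSymm [Invertible (2 : K)] (hK : ∀ a : K, IsSquare a)
    {M : Matrix m m K} (hM : M.IsSymm) : ∃ A : Matrix m (Fin M.rank) K, M = A * Aᵀ := by
  classical
  obtain ⟨P, d, hP, hPd⟩ := exists_eq_mul_diagonal_mul_transpose_of_isSymm hM
  have hPt : IsUnit Pᵀ.det := by rwa [det_transpose]
  have hrank : M.rank = Fintype.card {i // d i ≠ 0} := by
    rw [hPd, rank_mul_eq_left_of_isUnit_det _ _ hPt, rank_mul_eq_right_of_isUnit_det _ _ hP,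
      rank_diagonal]
  let σ : Fin M.rank ≃ {i // d i ≠ 0} := Fintype.equivOfCardEq (by simpa using hrank)
  obtain ⟨B, hB⟩ := exists_diagonal_eq_mul_transpose fun i ↦ hK (d i)
  refine ⟨(P * B).submatrix id σ, ?_⟩
  calc
    M = P * (B * Bᵀ) * Pᵀ := by rw [← hB, hPd]
    _ = (P * B) * (P * B)ᵀ := by simp only [transpose_mul, Matrix.mul_assoc]
    _ = (P * B).submatrix id σ * ((P * B).submatrix id σ)ᵀ := by
      rw [transpose_submatrix, submatrix_mul_equiv, submatrix_id_id]

end SymmetricFactorization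

theorem ok_higgs_branch_variety_general {m n K : Type*} [Fintype m] [Fintype n] [Field K]
    [Invertible (2 : K)] (hK : ∀ a : K, IsSquare a) (J M : Matrix m m K) :
    (Mᵀ = M ∧ M * J * M = 0 ∧ M.rank ≤ Fintype.card n) ↔
      ∃ Q : Matrix m n K, Qᵀ * J * Q = 0 ∧ M = Q * Qᵀ := by
  constructor
  · rintro ⟨hsymm, hnil, hrank⟩
    obtain ⟨A, hA⟩ := exists_eq_mul_transpose_of_isSymm hK hsymm
    have hAJA : Aᵀ * J * A = 0 :=
      transpose_mul_mul_eq_zero_of_rank_eq_card (by rw [← hA, Fintype.card_fin]) (by rwa [← hA])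
    obtain ⟨S, hS⟩ := exists_mul_transpose_eq_one (m := Fin M.rank) (n := n) (R := K)
      (by rwa [Fintype.card_fin])
    refine ⟨A * S, ?_, ?_⟩
    · calc
        (A * S)ᵀ * J * (A * S) = Sᵀ * (Aᵀ * J * A) * S := by
          simp only [transpose_mul, Matrix.mul_assoc]
        _ = 0 := by rw [hAJA, Matrix.mul_zero, Matrix.zero_mul]
    · calc
        M = A * (S * Sᵀ) * Aᵀ := by rw [hS, Matrix.mul_one, ← hA]
        _ = A * S * (A * S)ᵀ := by simp only [transpose_mul, Matrix.mul_assoc]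
  · rintro ⟨Q, hQ, rfl⟩
    refine ⟨by rw [transpose_mul, transpose_transpose], ?_,
      (rank_mul_le_left Q Qᵀ).trans Q.rank_le_card_width⟩
    calc
      Q * Qᵀ * J * (Q * Qᵀ) = Q * (Qᵀ * J * Q) * Qᵀ := by simp only [Matrix.mul_assoc]
      _ = 0 := by rw [hQ, Matrix.mul_zero, Matrix.zero_mul]

/-- Higgs branch of O(k) with Sp(N) flavour symmetry: a 2N×2N complex matrix M satisfies
Mᵀ = M, M Ω M = 0 and rank M ≤ k iff M = Q Qᵀ for a 2N×k matrix Q satisfying the F-term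
Qᵀ Ω Q = 0. -/
theorem ok_higgs_branch_variety (k N : ℕ) (hk : 0 < k) (hN : 0 < N)
    (M : Matrix (Fin N ⊕ Fin N) (Fin N ⊕ Fin N) ℂ) :
    (Mᵀ = M ∧ M * symplecticOmega N * M = 0 ∧ M.rank ≤ k) ↔
      ∃ Q : Matrix (Fin N ⊕ Fin N) (Fin k) ℂ,
        Qᵀ * symplecticOmega N * Q = 0 ∧ M = Q * Qᵀ := by
  simpa only [Fintype.card_fin] using ok_higgs_branch_variety_general (n := Fin k)
    IsAlgClosed.exists_eq_mul_self (symplecticOmega N) M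
end

section
/- Let n ≥ 1 and let S = {M ∈ ℂ^{4n×4n} : Mᵀ = −M, M * M = 0, rank M = 2n}. Consider the action of invertible complex matrices A on M by M ↦ A * M * A⁻¹. Then (1) S is a single orbit under the complex orthogonal group O(4n, ℂ) = {A : Aᵀ * A = 1}, and (2) S is the disjoint union of exactly two orbits under the complex special orthogonal group SO(4n, ℂ) = {A : Aᵀ * A = 1, det A = 1}: there exist M₁, M₂ ∈ S lying in distinct SO(4n, ℂ)-orbits such that every M ∈ S is SO(4n, ℂ)-conjugate to M₁ or to M₂. -/
/-!
The bilinear form `xᵀ M y` of a square-zero skew matrix `M` of half rank `2n` induces a symplectic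
form on the quotient by `ker M`, a Lagrangian subspace for `xᵀ y`. A symplectic basis of the
quotient lifts to a basis `w₁, …, w₂ₙ` of a Lagrangian complement of `ker M`. In the Jordan basis
`(M w₁, …, M w₂ₙ, w₁, …, w₂ₙ)` both `M` and the Gram matrix of `xᵀ y` are universal, so matching
the Jordan bases of two such matrices is an orthogonal conjugation between them.

An orthogonal matrix commuting with `M` has blocks `a b 0 a` in that basis, where `a` preserves the
symplectic form. Its determinant is therefore `(det a)² = 1`, so the stabilizer of `M` lies in the
special orthogonal group, which has index two, and the orbit splits in two.
-/

open Matrix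

/-- The orbit of a matrix M₀ under conjugation M ↦ A M A⁻¹ by the complex orthogonal
group O(N, ℂ) = {A : Aᵀ A = 1}. -/
def oOrbit {N : ℕ} (M₀ : Matrix (Fin N) (Fin N) ℂ) : Set (Matrix (Fin N) (Fin N) ℂ) :=
  {M | ∃ A : Matrix (Fin N) (Fin N) ℂ, Aᵀ * A = 1 ∧ M = A * M₀ * A⁻¹}

/-- The orbit of a matrix M₀ under conjugation M ↦ A M A⁻¹ by the complex special
orthogonal group SO(N, ℂ) = {A : Aᵀ A = 1, det A = 1}. -/
def soOrbit {N : ℕ} (M₀ : Matrix (Fin N) (Fin N) ℂ) : Set (Matrix (Fin N) (Fin N) ℂ) :=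
  {M | ∃ A : Matrix (Fin N) (Fin N) ℂ, Aᵀ * A = 1 ∧ A.det = 1 ∧ M = A * M₀ * A⁻¹}

section Gram

variable {ι κ R : Type*} [Fintype ι] [DecidableEq ι] [Fintype κ] [DecidableEq κ] [CommRing R]

theorem mul_gram_inv_mul_transpose {F : Matrix ι κ R} (hcard : Fintype.card ι = Fintype.card κ)
    (hF : IsUnit (Fᵀ * F).det) : F * ((Fᵀ * F)⁻¹ * Fᵀ) = 1 :=
  (mul_eq_one_comm_of_card_eq _ _ _ hcard).mpr <| by
    rw [Matrix.mul_assoc, nonsing_inv_mul _ hF]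

/-- The isometry is `A = F' (Fᵀ F)⁻¹ Fᵀ`. -/
theorem exists_orthogonal_mul_eq_of_gram_eq {F F' : Matrix ι κ R}
    (hcard : Fintype.card ι = Fintype.card κ) (hF : IsUnit (Fᵀ * F).det)
    (hgram : F'ᵀ * F' = Fᵀ * F) : ∃ A : Matrix ι ι R, Aᵀ * A = 1 ∧ A * F = F' := by
  refine ⟨F' * ((Fᵀ * F)⁻¹ * Fᵀ), ?_, ?_⟩
  · calc (F' * ((Fᵀ * F)⁻¹ * Fᵀ))ᵀ * (F' * ((Fᵀ * F)⁻¹ * Fᵀ))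
        = F * (Fᵀ * F)⁻¹ * (F'ᵀ * F') * ((Fᵀ * F)⁻¹ * Fᵀ) := by
          simp only [transpose_mul, transpose_nonsing_inv, transpose_transpose, Matrix.mul_assoc]
      _ = F * ((Fᵀ * F)⁻¹ * Fᵀ) := by
          rw [hgram, Matrix.mul_assoc F, nonsing_inv_mul _ hF, Matrix.mul_one]
      _ = 1 := mul_gram_inv_mul_transpose hcard hF
  · rw [Matrix.mul_assoc, Matrix.mul_assoc, nonsing_inv_mul _ hF, Matrix.mul_one]

end Gram

section JordanBasis

variable {ι m R : Type*} [Fintype ι] [CommRing R]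
  {M M' : Matrix ι ι R} {Ω : Matrix m m R} {W W' : Matrix ι m R}

/-- The columns of `W` span a subspace isotropic for the symmetric form `xᵀ y`, on which the
bilinear form `xᵀ M y` has Gram matrix `Ω`. For `M` square-zero skew of half rank and `Ω`
invertible, that subspace is a Lagrangian complement of `ker M`. -/
structure IsLagrangianFrame (M : Matrix ι ι R) (Ω : Matrix m m R) (W : Matrix ι m R) : Prop where
  isotropic : Wᵀ * W = 0
  gram : Wᵀ * M * W = Ω

/-- The Jordan basis `(M w₁, …, M wᵣ, w₁, …, wᵣ)` of a square-zero matrix `M` generated by the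
columns of `W`, as a matrix of columns. -/
def jordanBasis (M : Matrix ι ι R) (W : Matrix ι m R) : Matrix ι (m ⊕ m) R :=
  fromCols (M * W) W

theorem IsLagrangianFrame.gram_jordanBasis (h : IsLagrangianFrame M Ω W) (hskew : Mᵀ = -M)
    (hsq : M * M = 0) :
    (jordanBasis M W)ᵀ * jordanBasis M W = fromBlocks 0 (-Ω) Ω 0 := by
  have hUU : Wᵀ * M * (M * W) = 0 := by
    rw [Matrix.mul_assoc, ← Matrix.mul_assoc M, hsq, Matrix.zero_mul, Matrix.mul_zero]
  rw [jordanBasis, transpose_fromCols, fromRows_mul_fromCols, transpose_mul, hskew,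
    Matrix.mul_neg, Matrix.neg_mul, Matrix.neg_mul, hUU, h.gram, ← Matrix.mul_assoc, h.gram,
    h.isotropic, neg_zero]

variable [Fintype m] [DecidableEq m]

/-- The square-zero Jordan matrix with `m` blocks of size two, with the image vectors listed
first. -/
def jordanNilpotent (m R : Type*) [DecidableEq m] [CommRing R] : Matrix (m ⊕ m) (m ⊕ m) R :=
  fromBlocks 0 1 0 0

theorem mul_jordanBasis (hsq : M * M = 0) (W : Matrix ι m R) :
    M * jordanBasis M W = jordanBasis M W * jordanNilpotent m R := by
  simp [jordanBasis, jordanNilpotent, mul_fromCols, fromCols_mul_fromBlocks, ← Matrix.mul_assoc,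
    hsq]

theorem isUnit_det_fromBlocks_zero_neg_self_zero (hΩ : IsUnit Ω.det) :
    IsUnit (fromBlocks 0 (-Ω) Ω 0).det :=
  isUnit_det_of_left_inverse (B := fromBlocks 0 Ω⁻¹ (-Ω⁻¹) 0) <| by
    simp [fromBlocks_multiply, nonsing_inv_mul _ hΩ]

theorem IsLagrangianFrame.isUnit_det_gram_jordanBasis (h : IsLagrangianFrame M Ω W)
    (hskew : Mᵀ = -M) (hsq : M * M = 0) (hΩ : IsUnit Ω.det) :
    IsUnit ((jordanBasis M W)ᵀ * jordanBasis M W).det := by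
  rw [h.gram_jordanBasis hskew hsq]
  exact isUnit_det_fromBlocks_zero_neg_self_zero hΩ

theorem exists_eq_fromBlocks_of_commute {C : Matrix (m ⊕ m) (m ⊕ m) R}
    (hC : Commute C (jordanNilpotent m R)) : ∃ a b : Matrix m m R, C = fromBlocks a b 0 a := by
  have hblocks := hC.eq
  rw [← fromBlocks_toBlocks C, jordanNilpotent, fromBlocks_multiply, fromBlocks_multiply,
    fromBlocks_inj] at hblocks
  obtain ⟨h₁₁, h₁₂, -, -⟩ := hblocks
  simp only [Matrix.mul_zero, Matrix.mul_one, Matrix.one_mul, Matrix.zero_mul, add_zero,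
    zero_add] at h₁₁ h₁₂
  exact ⟨C.toBlocks₁₁, C.toBlocks₁₂, by conv_lhs => rw [← fromBlocks_toBlocks C, ← h₁₁, ← h₁₂]⟩

/-- Writing `C` with blocks `a b 0 a`, the isometry condition makes `a` an isometry of `Ω`. -/
theorem det_eq_one_of_commute_of_isometry {C : Matrix (m ⊕ m) (m ⊕ m) R} (hΩ : IsUnit Ω.det)
    (hC : Commute C (jordanNilpotent m R))
    (hisom : Cᵀ * fromBlocks 0 (-Ω) Ω 0 * C = fromBlocks 0 (-Ω) Ω 0) : C.det = 1 := by
  obtain ⟨a, b, rfl⟩ := exists_eq_fromBlocks_of_commute hC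
  have ha : aᵀ * Ω * a = Ω := by
    simpa [fromBlocks_transpose, fromBlocks_multiply] using congrArg toBlocks₂₁ hisom
  have hdet : a.det * a.det * Ω.det = 1 * Ω.det := by
    conv_rhs => rw [← ha, det_mul, det_mul, det_transpose]
    ring
  rw [det_fromBlocks_zero₂₁, hΩ.mul_right_cancel hdet]

variable [DecidableEq ι]

theorem IsLagrangianFrame.exists_orthogonal_semiconjBy (h : IsLagrangianFrame M Ω W)
    (h' : IsLagrangianFrame M' Ω W') (hskew : Mᵀ = -M) (hskew' : M'ᵀ = -M') (hsq : M * M = 0)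
    (hsq' : M' * M' = 0) (hΩ : IsUnit Ω.det) (hcard : Fintype.card ι = Fintype.card (m ⊕ m)) :
    ∃ A : Matrix ι ι R, Aᵀ * A = 1 ∧ SemiconjBy A M M' := by
  have hunit := h.isUnit_det_gram_jordanBasis hskew hsq hΩ
  obtain ⟨A, hA, hAF⟩ := exists_orthogonal_mul_eq_of_gram_eq hcard hunit
    ((h'.gram_jordanBasis hskew' hsq').trans (h.gram_jordanBasis hskew hsq).symm)
  have hF := mul_gram_inv_mul_transpose hcard hunit
  have hinter : A * M * jordanBasis M W = M' * A * jordanBasis M W := by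
    rw [Matrix.mul_assoc, mul_jordanBasis hsq, ← Matrix.mul_assoc, hAF, Matrix.mul_assoc, hAF,
      mul_jordanBasis hsq']
  refine ⟨A, hA, ?_⟩
  simpa only [SemiconjBy, Matrix.mul_assoc, hF, Matrix.mul_one] using
    congrArg (· * (((jordanBasis M W)ᵀ * jordanBasis M W)⁻¹ * (jordanBasis M W)ᵀ)) hinter

theorem IsLagrangianFrame.det_eq_one_of_commute (h : IsLagrangianFrame M Ω W) (hskew : Mᵀ = -M)
    (hsq : M * M = 0) (hΩ : IsUnit Ω.det) (hcard : Fintype.card ι = Fintype.card (m ⊕ m))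
    {B : Matrix ι ι R} (hB : Bᵀ * B = 1) (hcomm : Commute B M) : B.det = 1 := by
  have hunit := h.isUnit_det_gram_jordanBasis hskew hsq hΩ
  have hFL := mul_gram_inv_mul_transpose hcard hunit
  have hgram := h.gram_jordanBasis hskew hsq
  have hMF := mul_jordanBasis hsq W
  generalize ((jordanBasis M W)ᵀ * jordanBasis M W)⁻¹ * (jordanBasis M W)ᵀ = L at hFL
  generalize jordanBasis M W = F at hFL hgram hMF
  have hLF : L * F = 1 := (mul_eq_one_comm_of_card_eq _ _ _ hcard).mp hFL
  have hFC : F * (L * B * F) = B * F := by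
    rw [Matrix.mul_assoc L, ← Matrix.mul_assoc, hFL, Matrix.one_mul]
  rw [← det_conj_of_mul_eq_one hLF hFL]
  refine det_eq_one_of_commute_of_isometry hΩ ?_ ?_
  · calc L * B * F * jordanNilpotent m R = L * (B * M) * F := by
          rw [Matrix.mul_assoc, ← hMF]; simp only [Matrix.mul_assoc]
      _ = L * (M * (F * (L * B * F))) := by
          rw [hcomm.eq, hFC]; simp only [Matrix.mul_assoc]
      _ = jordanNilpotent m R * (L * B * F) := by
          rw [← Matrix.mul_assoc M, hMF, Matrix.mul_assoc, ← Matrix.mul_assoc L, hLF,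
            Matrix.one_mul]
  · calc (L * B * F)ᵀ * fromBlocks 0 (-Ω) Ω 0 * (L * B * F)
        = (F * (L * B * F))ᵀ * (F * (L * B * F)) := by
          rw [← hgram, transpose_mul F]; simp only [Matrix.mul_assoc]
      _ = Fᵀ * (Bᵀ * B) * F := by
          rw [hFC, transpose_mul]; simp only [Matrix.mul_assoc]
      _ = fromBlocks 0 (-Ω) Ω 0 := by rw [hB, Matrix.mul_one, hgram]

end JordanBasis

section SymplecticBasis

variable {ι m R : Type*} [Fintype ι] [Fintype m] [DecidableEq m] [CommRing R]
  {M : Matrix ι ι R} {Ω : Matrix m m R} {W : Matrix ι m R}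

/-- `P` projects onto the complement of the columns of `W` that is orthogonal to them for the
form `xᵀ M y`. -/
theorem exists_projection_of_card_lt_rank [Nontrivial R] (hskew : Mᵀ = -M)
    (hΩ : IsUnit Ω.det) (hW : Wᵀ * M * W = Ω) (hrank : Fintype.card m < M.rank) :
    ∃ P : Matrix ι ι R, Wᵀ * M * P = 0 ∧ Pᵀ * M * P ≠ 0 := by
  classical
  have hWP : Wᵀ * M * (1 - W * Ω⁻¹ * (Wᵀ * M)) = 0 := by
    rw [Matrix.mul_sub, Matrix.mul_one, Matrix.mul_assoc W, ← Matrix.mul_assoc _ W, hW,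
      ← Matrix.mul_assoc Ω, mul_nonsing_inv _ hΩ, Matrix.one_mul, sub_self]
  refine ⟨_, hWP, fun hzero => hrank.not_ge ?_⟩
  set P := 1 - W * Ω⁻¹ * (Wᵀ * M) with hP
  have hMP : M * P = 0 := by
    have hPt : Pᵀ = 1 + M * W * (Ω⁻¹)ᵀ * Wᵀ := by
      simp [hP, hskew, Matrix.mul_assoc]
    rwa [hPt, Matrix.mul_assoc, Matrix.add_mul, Matrix.one_mul, Matrix.mul_assoc _ Wᵀ,
      ← Matrix.mul_assoc Wᵀ, hWP, Matrix.mul_zero, add_zero] at hzero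
  have hfactor : M = M * (W * Ω⁻¹) * (Wᵀ * M) := by
    rwa [hP, Matrix.mul_sub, Matrix.mul_one, sub_eq_zero, ← Matrix.mul_assoc] at hMP
  rw [hfactor]
  exact (rank_mul_le_left _ _).trans (rank_le_card_width _)

theorem fromBlocks_J_J_eq_submatrix {l m n : Type*} [DecidableEq l] [DecidableEq m]
    [DecidableEq n] (R : Type*) [CommRing R] (f : l ⊕ m ≃ n) :
    fromBlocks (J l R) 0 0 (J m R) = (J n R).submatrix
      ((Equiv.sumSumSumComm l l m m).trans (f.sumCongr f))
      ((Equiv.sumSumSumComm l l m m).trans (f.sumCongr f)) := by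
  ext ((i | i) | (i | i)) ((j | j) | (j | j)) <;> simp [J, one_apply]

/-- Adding `M W S` to `W` does not change `Wᵀ M W`, and changes `Wᵀ W` by `Ω S + (Ω S)ᵀ`. -/
theorem exists_isLagrangianFrame [Invertible (2 : R)] (hskew : Mᵀ = -M) (hsq : M * M = 0)
    (hΩ : IsUnit Ω.det) (hW : Wᵀ * M * W = Ω) : ∃ W' : Matrix ι m R, IsLagrangianFrame M Ω W' := by
  obtain ⟨S, hS⟩ : ∃ S, Ω * S = (-⅟(2 : R)) • (Wᵀ * W) :=
    ⟨Ω⁻¹ * _, mul_nonsing_inv_cancel_left _ _ hΩ⟩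
  have hMM (X : Matrix ι m R) : M * (M * X) = 0 := by rw [← Matrix.mul_assoc, hsq, Matrix.zero_mul]
  have hSt : Sᵀ * Ωᵀ = Ω * S := by
    rw [← transpose_mul, hS, transpose_smul, transpose_mul, transpose_transpose]
  have hΩt : Ωᵀ = -Ω := by simp [← hW, hskew, Matrix.mul_assoc]
  refine ⟨W + M * W * S, ?_, ?_⟩
  · calc (W + M * W * S)ᵀ * (W + M * W * S)
        = Wᵀ * W + Wᵀ * M * W * S - Sᵀ * (Wᵀ * M * W) := by
          simp only [Matrix.mul_assoc, transpose_add, transpose_mul, hskew, Matrix.mul_neg,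
            Matrix.mul_add, Matrix.add_mul, Matrix.neg_mul, hMM, Matrix.mul_zero, neg_zero,
            add_zero, sub_eq_add_neg]
          abel
      _ = Wᵀ * W + Ω * S + Sᵀ * Ωᵀ := by rw [hW, hΩt, Matrix.mul_neg, sub_eq_add_neg]
      _ = 0 := by
          rw [hSt, hS, add_assoc, ← two_smul R, smul_smul, mul_neg, mul_invOf_self, neg_smul,
            one_smul, add_neg_cancel]
  · simp [Matrix.mul_add, Matrix.add_mul, hskew, Matrix.mul_assoc, hMM, ← hW]

variable {K : Type*} [Field K] [NeZero (2 : K)] {M : Matrix ι ι K}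

theorem exists_transpose_mul_mul_eq_J_of_ne_zero (hskew : Mᵀ = -M) (hM : M ≠ 0) :
    ∃ F : Matrix ι (Fin 1 ⊕ Fin 1) K, Fᵀ * M * F = J (Fin 1) K := by
  have happly (a b : ι) : M b a = -M a b := congrFun₂ hskew a b
  have hdiag (a : ι) : M a a = 0 := by
    have h : (2 : K) * M a a = 0 := by linear_combination happly a a
    exact (mul_eq_zero.mp h).resolve_left two_ne_zero
  obtain ⟨i, j, hij⟩ : ∃ i j, M i j ≠ 0 := by
    by_contra! hzero
    exact hM (Matrix.ext hzero)
  classical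
  refine ⟨fromCols (single j 0 (M i j)⁻¹) (single i 0 1), ?_⟩
  ext (a | a) (b | b) <;> fin_cases a <;> fin_cases b <;>
    simp [transpose_fromCols, fromRows_mul, J, hdiag, happly i j, hij]

theorem exists_transpose_mul_mul_eq_J (hskew : Mᵀ = -M) {k : ℕ} (hrank : 2 * k ≤ M.rank) :
    ∃ W : Matrix ι (Fin k ⊕ Fin k) K, Wᵀ * M * W = J (Fin k) K := by
  induction k with
  | zero => exact ⟨0, Subsingleton.elim _ _⟩
  | succ k ih =>
    obtain ⟨W, hW⟩ := ih (by omega)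
    obtain ⟨P, hWP, hP⟩ := exists_projection_of_card_lt_rank hskew (isUnit_det_J _ K) hW
      (by simp; omega)
    obtain ⟨F, hF⟩ := exists_transpose_mul_mul_eq_J_of_ne_zero
      (show (Pᵀ * M * P)ᵀ = -(Pᵀ * M * P) by simp [hskew, Matrix.mul_assoc]) hP
    have hPW : Pᵀ * M * W = 0 := by
      simpa [hskew, Matrix.mul_assoc] using congrArg transpose hWP
    have hWF : Wᵀ * M * (P * F) = 0 := by rw [← Matrix.mul_assoc, hWP, Matrix.zero_mul]
    have hFW : (P * F)ᵀ * M * W = 0 := by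
      rw [transpose_mul, Matrix.mul_assoc, Matrix.mul_assoc, ← Matrix.mul_assoc Pᵀ, hPW,
        Matrix.mul_zero]
    have hFF : (P * F)ᵀ * M * (P * F) = J (Fin 1) K := by
      rw [← hF]; simp only [transpose_mul, Matrix.mul_assoc]
    let e : (Fin k ⊕ Fin k) ⊕ (Fin 1 ⊕ Fin 1) ≃ Fin (k + 1) ⊕ Fin (k + 1) :=
      (Equiv.sumSumSumComm _ _ _ _).trans (finSumFinEquiv.sumCongr finSumFinEquiv)
    have hgram : (fromCols W (P * F))ᵀ * M * fromCols W (P * F) =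
        (J (Fin (k + 1)) K).submatrix e e := by
      rw [transpose_fromCols, fromRows_mul, fromRows_mul_fromCols, hW, hWF, hFW, hFF,
        fromBlocks_J_J_eq_submatrix K finSumFinEquiv]
    refine ⟨(fromCols W (P * F)).submatrix id e.symm, ?_⟩
    calc _ = ((fromCols W (P * F))ᵀ * M * fromCols W (P * F)).submatrix e.symm e.symm := rfl
      _ = J (Fin (k + 1)) K := by rw [hgram]; simp

end SymplecticBasis

section Orbits

variable {ι R : Type*} [Fintype ι] [DecidableEq ι] [CommRing R]

/-- The orbit of `M₀` under conjugation by the orthogonal group of the form `xᵀ y`. -/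
def orthogonalOrbit (M₀ : Matrix ι ι R) : Set (Matrix ι ι R) :=
  {M | ∃ A : Matrix ι ι R, Aᵀ * A = 1 ∧ M = A * M₀ * A⁻¹}

/-- The orbit of `M₀` under conjugation by the special orthogonal group of the form `xᵀ y`. -/
def specialOrthogonalOrbit (M₀ : Matrix ι ι R) : Set (Matrix ι ι R) :=
  {M | ∃ A : Matrix ι ι R, Aᵀ * A = 1 ∧ A.det = 1 ∧ M = A * M₀ * A⁻¹}

theorem eq_mul_mul_inv_iff_semiconjBy {A M M₀ : Matrix ι ι R} (hA : Aᵀ * A = 1) :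
    M = A * M₀ * A⁻¹ ↔ SemiconjBy A M₀ M := by
  have hdet := isUnit_det_of_left_inverse hA
  constructor
  · rintro rfl
    exact (nonsing_inv_mul_cancel_right _ _ hdet).symm
  · intro h
    rw [h.eq, mul_nonsing_inv_cancel_right _ _ hdet]

theorem mem_orthogonalOrbit_iff {M M₀ : Matrix ι ι R} :
    M ∈ orthogonalOrbit M₀ ↔ ∃ A : Matrix ι ι R, Aᵀ * A = 1 ∧ SemiconjBy A M₀ M :=
  exists_congr fun _ => and_congr_right eq_mul_mul_inv_iff_semiconjBy

theorem mem_specialOrthogonalOrbit_iff {M M₀ : Matrix ι ι R} :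
    M ∈ specialOrthogonalOrbit M₀ ↔
      ∃ A : Matrix ι ι R, Aᵀ * A = 1 ∧ A.det = 1 ∧ SemiconjBy A M₀ M :=
  exists_congr fun _ => and_congr_right fun hA =>
    and_congr_right fun _ => eq_mul_mul_inv_iff_semiconjBy hA

theorem transpose_mul_self_mul_eq_one {A B : Matrix ι ι R} (hA : Aᵀ * A = 1) (hB : Bᵀ * B = 1) :
    (A * B)ᵀ * (A * B) = 1 := by
  rw [transpose_mul, Matrix.mul_assoc, ← Matrix.mul_assoc Aᵀ, hA, Matrix.one_mul, hB]

theorem semiconjBy_transpose {A M M' : Matrix ι ι R} (hA : Aᵀ * A = 1) (h : SemiconjBy A M M') :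
    SemiconjBy Aᵀ M' M := by
  have hA' : A * Aᵀ = 1 := mul_eq_one_comm.mp hA
  calc Aᵀ * M' = Aᵀ * (M' * A) * Aᵀ := by
        rw [Matrix.mul_assoc, Matrix.mul_assoc, hA', Matrix.mul_one]
    _ = M * Aᵀ := by rw [← h.eq, ← Matrix.mul_assoc, hA, Matrix.one_mul]

theorem exists_orthogonal_det_eq_neg_one [Nontrivial ι] :
    ∃ A : Matrix ι ι R, Aᵀ * A = 1 ∧ A.det = -1 := by
  obtain ⟨i, j, hij⟩ := exists_pair_ne ι
  refine ⟨(Equiv.swap i j).permMatrix R, ?_, ?_⟩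
  · rw [transpose_permMatrix, ← permMatrix_mul, mul_inv_cancel, permMatrix_one]
  · simp [det_permutation, Equiv.Perm.sign_swap hij]

theorem orthogonalOrbit_eq_union [NoZeroDivisors R] {A : Matrix ι ι R} (hA : Aᵀ * A = 1)
    (hdet : A.det = -1) (M : Matrix ι ι R) : orthogonalOrbit M =
      specialOrthogonalOrbit M ∪ specialOrthogonalOrbit (A * M * A⁻¹) := by
  have hconj : SemiconjBy A M (A * M * A⁻¹) := (eq_mul_mul_inv_iff_semiconjBy hA).mp rfl
  ext X
  simp only [Set.mem_union, mem_orthogonalOrbit_iff, mem_specialOrthogonalOrbit_iff]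
  constructor
  · rintro ⟨B, hB, hX⟩
    have hBdet : B.det * B.det = 1 := by simpa using congrArg det hB
    rcases mul_self_eq_one_iff.mp hBdet with h | h
    · exact .inl ⟨B, hB, h, hX⟩
    · have hA' : Aᵀᵀ * Aᵀ = 1 := mul_eq_one_comm.mp hA
      exact .inr ⟨B * Aᵀ, transpose_mul_self_mul_eq_one hB hA', by simp [h, hdet],
        hX.mul_left (semiconjBy_transpose hA hconj)⟩
  · rintro (⟨B, hB, -, hX⟩ | ⟨B, hB, -, hX⟩)
    · exact ⟨B, hB, hX⟩
    · exact ⟨B * A, transpose_mul_self_mul_eq_one hB hA, hX.mul_left hconj⟩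

theorem specialOrthogonalOrbit_inter_conj_eq_empty [NeZero (2 : R)] {M A : Matrix ι ι R}
    (hstab : ∀ B : Matrix ι ι R, Bᵀ * B = 1 → Commute B M → B.det = 1)
    (hA : Aᵀ * A = 1) (hdet : A.det = -1) :
    specialOrthogonalOrbit M ∩ specialOrthogonalOrbit (A * M * A⁻¹) = ∅ := by
  refine Set.eq_empty_of_forall_notMem fun X => ?_
  rw [Set.mem_inter_iff, mem_specialOrthogonalOrbit_iff, mem_specialOrthogonalOrbit_iff]
  rintro ⟨⟨B, hB, hBdet, hBX⟩, C, hC, hCdet, hCX⟩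
  have hconj : SemiconjBy A M (A * M * A⁻¹) := (eq_mul_mul_inv_iff_semiconjBy hA).mp rfl
  have hB' : Bᵀᵀ * Bᵀ = 1 := mul_eq_one_comm.mp hB
  have hone := hstab (Bᵀ * (C * A))
    (transpose_mul_self_mul_eq_one hB' (transpose_mul_self_mul_eq_one hC hA))
    ((semiconjBy_transpose hB hBX).mul_left (hCX.mul_left hconj))
  rw [det_mul, det_mul, det_transpose, hBdet, hCdet, hdet, one_mul, one_mul] at hone
  exact two_ne_zero (α := R) (by linear_combination -hone)

end Orbits

/-- The stratum of rank `r` of the variety of square-zero skew-symmetric matrices. -/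
def squareZeroSkew (ι R : Type*) [Fintype ι] [CommRing R] (r : ℕ) : Set (Matrix ι ι R) :=
  {M | Mᵀ = -M ∧ M * M = 0 ∧ M.rank = r}

section SquareZeroSkew

variable {ι m K : Type*} [Fintype ι] [Fintype m] [DecidableEq m] [Field K]
  {M : Matrix ι ι K} {n : ℕ}

/-- With `i² = -1`, the matrix with blocks `Ω`, `i Ω`, `i Ω`, `-Ω` is a witness. -/
theorem squareZeroSkew_nonempty {Ω : Matrix m m K} (hi : IsSquare (-1 : K)) (hskew : Ωᵀ = -Ω)
    (hΩ : IsUnit Ω.det) (hcard : Fintype.card ι = Fintype.card (m ⊕ m)) :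
    (squareZeroSkew ι K (Fintype.card m)).Nonempty := by
  obtain ⟨i, hi⟩ := hi
  let e := Fintype.equivOfCardEq hcard
  let N : Matrix (m ⊕ m) (m ⊕ m) K := fromBlocks Ω (i • Ω) (i • Ω) (-Ω)
  have hNN : N * N = 0 := by
    simp [N, fromBlocks_multiply, smul_smul, ← hi]
  have hNskew : Nᵀ = -N := by
    simp [N, fromBlocks_transpose, fromBlocks_neg, hskew]
  have hrank_le : 2 * N.rank ≤ Fintype.card (m ⊕ m) := by
    simpa [two_mul] using rank_add_rank_le_card_of_mul_eq_zero hNN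
  have hle_rank : Fintype.card m ≤ N.rank := by
    rw [← rank_of_isUnit Ω ((isUnit_iff_isUnit_det Ω).mpr hΩ)]
    exact rank_submatrix_le N Sum.inl Sum.inl
  refine ⟨N.submatrix e e, ?_, ?_, ?_⟩
  · rw [transpose_submatrix, hNskew]; rfl
  · rw [submatrix_mul_equiv, hNN]; rfl
  · rw [rank_submatrix]
    rw [Fintype.card_sum] at hrank_le
    omega

theorem exists_isLagrangianFrame_J [NeZero (2 : K)] (hM : M ∈ squareZeroSkew ι K (2 * n)) :
    ∃ W, IsLagrangianFrame M (J (Fin n) K) W := by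
  obtain ⟨W, hW⟩ := exists_transpose_mul_mul_eq_J hM.1 hM.2.2.ge
  let : Invertible (2 : K) := invertibleOfNonzero two_ne_zero
  exact exists_isLagrangianFrame hM.1 hM.2.1 (isUnit_det_J _ K) hW

variable [DecidableEq ι]

theorem mul_mul_inv_mem_squareZeroSkew {R : Type*} [CommRing R] {A M : Matrix ι ι R} {r : ℕ}
    (hA : Aᵀ * A = 1) (hM : M ∈ squareZeroSkew ι R r) :
    A * M * A⁻¹ ∈ squareZeroSkew ι R r := by
  obtain ⟨hskew, hsq, hrank⟩ := hM
  have hdet := isUnit_det_of_left_inverse hA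
  refine ⟨?_, ?_, ?_⟩
  · simp [inv_eq_left_inv hA, hskew, Matrix.mul_assoc]
  · rw [Matrix.mul_assoc, ← Matrix.mul_assoc A⁻¹, ← Matrix.mul_assoc A⁻¹, nonsing_inv_mul _ hdet,
      Matrix.one_mul, ← Matrix.mul_assoc, Matrix.mul_assoc A, hsq, Matrix.mul_zero,
      Matrix.zero_mul]
  · rw [rank_mul_eq_left_of_isUnit_det _ _ (isUnit_nonsing_inv_det _ hdet),
      rank_mul_eq_right_of_isUnit_det _ _ hdet, hrank]

variable [NeZero (2 : K)]

theorem squareZeroSkew_eq_orthogonalOrbit (hcard : Fintype.card ι = 4 * n)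
    (hM : M ∈ squareZeroSkew ι K (2 * n)) : squareZeroSkew ι K (2 * n) = orthogonalOrbit M := by
  ext X
  constructor
  · intro hX
    obtain ⟨W, hW⟩ := exists_isLagrangianFrame_J hM
    obtain ⟨W', hW'⟩ := exists_isLagrangianFrame_J hX
    exact mem_orthogonalOrbit_iff.mpr <| hW.exists_orthogonal_semiconjBy hW' hM.1 hX.1 hM.2.1
      hX.2.1 (isUnit_det_J _ K) (by simp; omega)
  · rintro ⟨A, hA, rfl⟩
    exact mul_mul_inv_mem_squareZeroSkew hA hM

theorem det_eq_one_of_commute_squareZeroSkew (hcard : Fintype.card ι = 4 * n)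
    (hM : M ∈ squareZeroSkew ι K (2 * n)) {B : Matrix ι ι K} (hB : Bᵀ * B = 1)
    (hcomm : Commute B M) : B.det = 1 := by
  obtain ⟨W, hW⟩ := exists_isLagrangianFrame_J hM
  exact hW.det_eq_one_of_commute hM.1 hM.2.1 (isUnit_det_J _ K) (by simp; omega) hB hcomm

theorem very_even_orbit_splitting_general (hn : 1 ≤ n) (hcard : Fintype.card ι = 4 * n)
    (hS : (squareZeroSkew ι K (2 * n)).Nonempty) :
    (∃ M₀ ∈ squareZeroSkew ι K (2 * n), squareZeroSkew ι K (2 * n) = orthogonalOrbit M₀) ∧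
    (∃ M₁ ∈ squareZeroSkew ι K (2 * n), ∃ M₂ ∈ squareZeroSkew ι K (2 * n),
      specialOrthogonalOrbit M₁ ∩ specialOrthogonalOrbit M₂ = ∅ ∧
      squareZeroSkew ι K (2 * n) = specialOrthogonalOrbit M₁ ∪ specialOrthogonalOrbit M₂) := by
  have : Nontrivial ι := Fintype.one_lt_card_iff_nontrivial.mp (by omega)
  obtain ⟨M, hM⟩ := hS
  obtain ⟨A, hA, hdet⟩ := exists_orthogonal_det_eq_neg_one (ι := ι) (R := K)
  have horbit := squareZeroSkew_eq_orthogonalOrbit hcard hM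
  have hdisjoint := specialOrthogonalOrbit_inter_conj_eq_empty
    (fun _ => det_eq_one_of_commute_squareZeroSkew hcard hM) hA hdet
  exact ⟨⟨M, hM, horbit⟩, M, hM, A * M * A⁻¹, mul_mul_inv_mem_squareZeroSkew hA hM, hdisjoint,
    horbit.trans (orthogonalOrbit_eq_union hA hdet M)⟩

end SquareZeroSkew

/-- The square-zero antisymmetric 4n×4n complex matrices of maximal rank 2n form a single
O(4n, ℂ)-orbit, which splits into exactly two disjoint SO(4n, ℂ)-orbits (the very even
nilpotent orbits of the partition (2^{2n}) of SO(4n)). -/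
theorem very_even_orbit_splitting (n : ℕ) (hn : 1 ≤ n) :
    (∃ M₀ ∈ {M : Matrix (Fin (4 * n)) (Fin (4 * n)) ℂ |
        Mᵀ = -M ∧ M * M = 0 ∧ M.rank = 2 * n},
      {M : Matrix (Fin (4 * n)) (Fin (4 * n)) ℂ |
        Mᵀ = -M ∧ M * M = 0 ∧ M.rank = 2 * n} = oOrbit M₀) ∧
    (∃ M₁ ∈ {M : Matrix (Fin (4 * n)) (Fin (4 * n)) ℂ |
        Mᵀ = -M ∧ M * M = 0 ∧ M.rank = 2 * n},
      ∃ M₂ ∈ {M : Matrix (Fin (4 * n)) (Fin (4 * n)) ℂ |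
        Mᵀ = -M ∧ M * M = 0 ∧ M.rank = 2 * n},
      soOrbit M₁ ∩ soOrbit M₂ = ∅ ∧
      {M : Matrix (Fin (4 * n)) (Fin (4 * n)) ℂ |
        Mᵀ = -M ∧ M * M = 0 ∧ M.rank = 2 * n} = soOrbit M₁ ∪ soOrbit M₂) :=
  very_even_orbit_splitting_general hn (Fintype.card_fin _) <| by
    simpa [two_mul] using squareZeroSkew_nonempty (ι := Fin (4 * n)) (by simp)
      (J_transpose (Fin n) ℂ) (isUnit_det_J _ ℂ) (by simp; omega)
end

section
/- Let n ≥ 1 and let k be an integer with 0 ≤ k < n. Then the set {M ∈ ℂ^{4n×4n} : Mᵀ = −M, M * M = 0, rank M = 2k} is a single orbit under the action M ↦ A * M * A⁻¹ of the complex special orthogonal group SO(4n, ℂ) = {A : Aᵀ * A = 1, det A = 1}. -/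
/-!
If `P` conjugates an antisymmetric matrix `M` to an antisymmetric matrix `M'`, transposing shows
that the invertible symmetric matrix `S = Pᵀ P` commutes with `M`. It has a square root `Q` which is
a polynomial in `S`, hence is symmetric and commutes with `M` as well, and `A = P Q⁻¹` is an
orthogonal matrix which still conjugates `M` to `M'`. Since a square-zero endomorphism is determined
up to similarity by its rank, it follows that antisymmetric square-zero matrices of equal rank are
conjugate under the orthogonal group.

Below the critical rank there is a base point with a vanishing row and column. The reflection in the
corresponding coordinate has determinant `-1` and commutes with the base point, so the conjugating
matrix can be taken of determinant `1`.
-/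

open Matrix

open Polynomial

section SquareRoot

lemma isSquare_of_isNilpotent_sq_sub {R : Type*} [CommRing R] (h2 : IsUnit (2 : R)) {a x : R}
    (ha : IsUnit a) (hx : IsNilpotent (x ^ 2 - a)) : IsSquare a := by
  have hx_unit : IsUnit x := by
    refine (isUnit_pow_iff two_ne_zero).1 ?_
    simpa using hx.isUnit_add_left_of_commute ha (Commute.all _ _)
  obtain ⟨y, ⟨-, hy⟩, -⟩ := existsUnique_nilpotent_sub_and_aeval_eq_zero
    (P := (X ^ 2 - C a : R[X])) (x := x)
    (by simpa using hx) (by simpa [one_add_one_eq_two] using And.intro h2 hx_unit)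
  exact ⟨y, by simpa [sub_eq_zero, sq, eq_comm] using hy⟩

lemma dvd_pow_card_roots_of_forall_isRoot {R : Type*} [CommRing R] [IsDomain R] {f g : R[X]}
    (hf : f.Monic) (hsplits : f.Splits) (hg : ∀ z ∈ f.roots, g.IsRoot z) :
    f ∣ g ^ f.roots.card := by
  conv_lhs => rw [hsplits.eq_prod_roots_of_monic hf]
  rw [← Multiset.prod_replicate, ← Multiset.map_const']
  exact Multiset.prod_dvd_prod_of_dvd _ _ fun z hz => dvd_iff_isRoot.2 (hg z hz)

variable {K : Type*} [Field K] [IsAlgClosed K]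

lemma exists_isNilpotent_aeval_sq_sub {A : Type*} [Ring A] [Algebra K A] {a : A}
    (ha : IsIntegral K a) : ∃ p : K[X], IsNilpotent (aeval a p ^ 2 - a) := by
  classical
  choose s hs using fun z : K => IsAlgClosed.exists_pow_nat_eq z two_pos
  let p : K[X] := Lagrange.interpolate (minpoly K a).roots.toFinset id s
  have hp : ∀ z ∈ (minpoly K a).roots, (p ^ 2 - X).IsRoot z := by
    intro z hz
    have hpz : p.eval z = s z := Lagrange.eval_interpolate_at_node (v := id) s
      (Set.injOn_id _) (Multiset.mem_toFinset.2 hz)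
    simp [hpz, hs]
  have hdvd := dvd_pow_card_roots_of_forall_isRoot (minpoly.monic ha) (IsAlgClosed.splits _) hp
  exact ⟨p, _, by simpa using aeval_eq_zero_of_dvd_aeval_eq_zero hdvd (minpoly.aeval K a)⟩

theorem exists_mem_adjoin_mul_self_eq [NeZero (2 : K)] {A : Type*} [Ring A] [Algebra K A] {a : A}
    (ha : IsUnit a) (hint : IsIntegral K a) : ∃ b ∈ Algebra.adjoin K {a}, b * b = a := by
  let B := Algebra.adjoin K {a}
  let a' : B := ⟨a, Algebra.self_mem_adjoin_singleton K a⟩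
  have hval : Function.Injective B.val := Subtype.val_injective
  have hint' : IsIntegral K a' := (isIntegral_algHom_iff B.val hval).1 hint
  have ha' : IsUnit a' := IsArtinianRing.isUnit_of_isIntegral_of_nonZeroDivisor hint'
    (comap_nonZeroDivisors_le_of_injective (f := B.val) hval ha.mem_nonZeroDivisors)
  have h2 : IsUnit (2 : B) :=
    map_ofNat (algebraMap K B) 2 ▸ (IsUnit.mk0 (2 : K) two_ne_zero).map (algebraMap K B)
  obtain ⟨p, hp⟩ := exists_isNilpotent_aeval_sq_sub hint'
  obtain ⟨b, hb⟩ := isSquare_of_isNilpotent_sq_sub h2 ha' hp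
  exact ⟨b, b.2, (congrArg Subtype.val hb).symm⟩

end SquareRoot

section OrthogonalConjugation

variable {ι R K : Type*} [Fintype ι] [DecidableEq ι] [CommRing R] [Field K]

lemma isSymm_of_mem_adjoin {S Q : Matrix ι ι R} (hS : S.IsSymm)
    (hQ : Q ∈ Algebra.adjoin R {S}) : Q.IsSymm := by
  obtain ⟨q, rfl⟩ := Algebra.adjoin_singleton_eq_range_aeval R S ▸ hQ
  simp [IsSymm, aeval_eq_sum_range, transpose_sum, transpose_pow, hS.eq]

theorem exists_mem_orthogonalGroup_semiconjBy_of_transpose [IsAlgClosed K] [NeZero (2 : K)]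
    {M M' P : Matrix ι ι K} (hP : IsUnit P) (hM : SemiconjBy P M M') (hMT : SemiconjBy P Mᵀ M'ᵀ) :
    ∃ A ∈ orthogonalGroup ι K, SemiconjBy A M M' := by
  have hPT : SemiconjBy Pᵀ M' M := by
    simpa [SemiconjBy, transpose_mul] using (congrArg transpose hMT.eq).symm
  have hS : IsUnit (Pᵀ * P) := (isUnit_transpose P).2 hP |>.mul hP
  obtain ⟨Q, hQ_mem, hQQ⟩ := exists_mem_adjoin_mul_self_eq hS
    (Algebra.IsIntegral.isIntegral (R := K) _)
  have hQ_symm : Qᵀ = Q := isSymm_of_mem_adjoin (isSymm_transpose_mul_self P) hQ_mem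
  have hQ_comm : Commute Q M :=
    (Algebra.commute_of_mem_adjoin_singleton_of_commute hQ_mem (hPT.mul_left hM).symm).symm
  obtain ⟨u, rfl⟩ : IsUnit Q := isUnit_of_mul_isUnit_left (hQQ ▸ hS)
  refine ⟨P * ↑u⁻¹, (mem_orthogonalGroup_iff' ι K).2 ?_,
    hM.mul_left hQ_comm.units_inv_left.semiconjBy⟩
  have hu_symm : (↑u⁻¹ : Matrix ι ι K)ᵀ = ↑u⁻¹ := by
    rw [coe_units_inv, transpose_nonsing_inv, hQ_symm]
  calc (P * ↑u⁻¹)ᵀ * (P * ↑u⁻¹) = ↑u⁻¹ * (Pᵀ * P) * ↑u⁻¹ := by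
        simp only [transpose_mul, hu_symm, mul_assoc]
    _ = 1 := by simp [← hQQ]

end OrthogonalConjugation

section SquareZero

lemma exists_linearEquiv_range_prod_of_comp_self_eq_zero {K V : Type*} [DivisionRing K]
    [AddCommGroup V] [Module K V] (f : V →ₗ[K] V) (hf : f ∘ₗ f = 0) :
    ∃ (D : Submodule K f.ker) (e : (f.range × f.range × D) ≃ₗ[K] V),
      ∀ x, f (e x) = e (0, x.1, 0) := by
  have hle : f.range ≤ f.ker := LinearMap.range_le_ker_iff.2 hf
  obtain ⟨C, hC⟩ := Submodule.exists_isCompl f.ker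
  obtain ⟨D, hD⟩ := Submodule.exists_isCompl (f.range.comap f.ker.subtype)
  let s : f.range ≃ₗ[K] C := (f.kerComplementEquivRange hC.symm).symm
  let t : (f.range × D) ≃ₗ[K] f.ker :=
    (Submodule.comapSubtypeEquivOfLe hle).symm.prodCongr (.refl K D) ≪≫ₗ
      Submodule.prodEquivOfIsCompl _ _ hD
  let e : (f.range × f.range × D) ≃ₗ[K] V :=
    s.prodCongr t ≪≫ₗ Submodule.prodEquivOfIsCompl _ _ hC.symm
  have hs : ∀ r : f.range, f (s r) = r := fun r =>
    congrArg Subtype.val ((f.kerComplementEquivRange hC.symm).apply_symm_apply r)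
  have he : ∀ x, e x = s x.1 + t x.2 := fun _ => rfl
  have ht : ∀ r : f.range, (t (r, 0) : V) = r := fun r => by simp [t]
  exact ⟨D, e, fun x => by simp [he, hs, ht]⟩

variable {K V W : Type*} [DivisionRing K] [AddCommGroup V] [Module K V] [FiniteDimensional K V]
  [AddCommGroup W] [Module K W] [FiniteDimensional K W]

theorem exists_linearEquiv_semiconj_of_comp_self_eq_zero {f : V →ₗ[K] V} {g : W →ₗ[K] W}
    (hf : f ∘ₗ f = 0) (hg : g ∘ₗ g = 0) (hVW : Module.finrank K V = Module.finrank K W)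
    (hrank : Module.finrank K f.range = Module.finrank K g.range) :
    ∃ e : V ≃ₗ[K] W, ∀ x, e (f x) = g (e x) := by
  obtain ⟨D, e, he⟩ := exists_linearEquiv_range_prod_of_comp_self_eq_zero f hf
  obtain ⟨D', e', he'⟩ := exists_linearEquiv_range_prod_of_comp_self_eq_zero g hg
  have hD : Module.finrank K D = Module.finrank K D' := by
    have hdim := e.finrank_eq
    have hdim' := e'.finrank_eq
    simp only [Module.finrank_prod] at hdim hdim'
    omega
  let a := LinearEquiv.ofFinrankEq f.range g.range hrank
  let b := LinearEquiv.ofFinrankEq D D' hD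
  refine ⟨e.symm ≪≫ₗ a.prodCongr (a.prodCongr b) ≪≫ₗ e', fun x => ?_⟩
  obtain ⟨y, rfl⟩ := e.surjective x
  simp [he, he']

theorem exists_isUnit_semiconjBy_of_mul_self_eq_zero {ι K : Type*}
    [Fintype ι] [DecidableEq ι] [Field K] {M M' : Matrix ι ι K}
    (hM : M * M = 0) (hM' : M' * M' = 0) (hrank : M.rank = M'.rank) :
    ∃ P : Matrix ι ι K, IsUnit P ∧ SemiconjBy P M M' := by
  obtain ⟨e, he⟩ := exists_linearEquiv_semiconj_of_comp_self_eq_zero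
    (f := toLin' M) (g := toLin' M') (by rw [← toLin'_mul, hM, map_zero])
    (by rw [← toLin'_mul, hM', map_zero]) rfl hrank
  refine ⟨LinearMap.toMatrix' e.toLinearMap, ?_, toLin'.injective ?_⟩
  · rw [isUnit_iff_isUnit_det, LinearMap.det_toMatrix']
    exact e.isUnit_det'
  · rw [toLin'_mul, toLin'_mul, toLin'_toMatrix']
    exact LinearMap.ext he

end SquareZero

section Reflection

variable {ι R : Type*} [DecidableEq ι] [CommRing R]

/-- The matrix of the reflection in the `i`-th coordinate hyperplane, which changes the sign of the
`i`-th coordinate. It serves to pass from the orthogonal to the special orthogonal group. -/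
def coordReflection (R : Type*) [CommRing R] (i : ι) : Matrix ι ι R :=
  diagonal (Pi.mulSingle i (-1))

variable [Fintype ι]

lemma coordReflection_mem_orthogonalGroup (i : ι) :
    coordReflection R i ∈ orthogonalGroup ι R := by
  rw [mem_orthogonalGroup_iff', coordReflection, diagonal_transpose, diagonal_mul_diagonal']
  ext a b
  by_cases ha : a = i <;> simp [diagonal_apply, one_apply, ha]

lemma det_coordReflection (i : ι) : (coordReflection R i).det = -1 := by
  simp [coordReflection]

lemma commute_coordReflection {M : Matrix ι ι R} {i : ι} (hrow : ∀ j, M i j = 0)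
    (hcol : ∀ j, M j i = 0) : Commute (coordReflection R i) M := by
  ext a b
  rw [coordReflection, diagonal_mul, mul_diagonal]
  by_cases ha : a = i <;> by_cases hb : b = i <;> simp_all

theorem exists_mem_specialOrthogonalGroup_semiconjBy_of_row_col_eq_zero [IsDomain R]
    {M M' A : Matrix ι ι R} {i : ι} (hrow : ∀ j, M i j = 0) (hcol : ∀ j, M j i = 0)
    (hA : A ∈ orthogonalGroup ι R) (hAM : SemiconjBy A M M') :
    ∃ B ∈ specialOrthogonalGroup ι R, SemiconjBy B M M' := by
  have hdet : A.det = 1 ∨ A.det = -1 := by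
    simpa [mul_self_eq_one_iff] using congrArg det ((mem_orthogonalGroup_iff' ι _).1 hA)
  rcases hdet with hdet | hdet
  · exact ⟨A, mem_specialOrthogonalGroup_iff.2 ⟨hA, hdet⟩, hAM⟩
  · refine ⟨A * coordReflection R i, mem_specialOrthogonalGroup_iff.2 ⟨?_, ?_⟩,
      hAM.mul_left (commute_coordReflection hrow hcol)⟩
    · exact mul_mem hA (coordReflection_mem_orthogonalGroup i)
    · rw [det_mul, hdet, det_coordReflection, neg_mul_neg, one_mul]

end Reflection

section Stratum

variable {ι m R K : Type*} [Fintype ι] [CommRing R] [Field K]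

/-- The antisymmetric square-zero matrices of rank `r`: the rank strata of the Higgs branch. -/
def skewSquareZero (ι R : Type*) [Fintype ι] [CommRing R] (r : ℕ) : Set (Matrix ι ι R) :=
  {M | Mᵀ = -M ∧ M * M = 0 ∧ M.rank = r}

lemma conj_mem_skewSquareZero [DecidableEq ι] {r : ℕ} {M A : Matrix ι ι R}
    (hM : M ∈ skewSquareZero ι R r) (hA : A ∈ orthogonalGroup ι R) :
    A * M * A⁻¹ ∈ skewSquareZero ι R r := by
  obtain ⟨hskew, hsq, hrank⟩ := hM
  have hAA : Aᵀ * A = 1 := (mem_orthogonalGroup_iff' ι _).1 hA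
  have hdet : IsUnit A.det := (isUnit_iff_isUnit_det A).1 (.of_mul_eq_one_right _ hAA)
  rw [inv_eq_left_inv hAA]
  refine ⟨by simp [transpose_mul, hskew, mul_assoc], ?_, ?_⟩
  · calc A * M * Aᵀ * (A * M * Aᵀ) = A * M * (Aᵀ * A) * M * Aᵀ := by simp only [mul_assoc]
      _ = A * (M * M) * Aᵀ := by simp only [hAA, mul_one, mul_assoc]
      _ = 0 := by simp [hsq]
  · rw [rank_mul_eq_left_of_isUnit_det _ _ (by rwa [det_transpose]),
      rank_mul_eq_right_of_isUnit_det _ _ hdet, hrank]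

theorem exists_mem_orthogonalGroup_semiconjBy_of_mem_skewSquareZero [DecidableEq ι]
    [IsAlgClosed K] [NeZero (2 : K)] {r : ℕ} {M M' : Matrix ι ι K} (hM : M ∈ skewSquareZero ι K r)
    (hM' : M' ∈ skewSquareZero ι K r) : ∃ A ∈ orthogonalGroup ι K, SemiconjBy A M M' := by
  obtain ⟨hskew, hsq, hrank⟩ := hM
  obtain ⟨hskew', hsq', hrank'⟩ := hM'
  obtain ⟨P, hP, hPM⟩ :=
    exists_isUnit_semiconjBy_of_mul_self_eq_zero hsq hsq' (hrank.trans hrank'.symm)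
  have hPMT : SemiconjBy P Mᵀ M'ᵀ := by
    rw [hskew, hskew']
    exact hPM.neg_right
  exact exists_mem_orthogonalGroup_semiconjBy_of_transpose hP hPM hPMT

lemma mul_mul_transpose_mem_skewSquareZero [StrongRankCondition R] [Fintype m] [DecidableEq m]
    {U : Matrix ι m R} {L : Matrix m ι R} {J : Matrix m m R} (hU : Uᵀ * U = 0) (hLU : L * U = 1)
    (hJ : Jᵀ = -J) : U * J * Uᵀ ∈ skewSquareZero ι R J.rank := by
  refine ⟨by simp [transpose_mul, hJ, Matrix.mul_assoc], ?_, le_antisymm ?_ ?_⟩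
  · calc U * J * Uᵀ * (U * J * Uᵀ)
      _ = U * J * (Uᵀ * U) * J * Uᵀ := by simp only [Matrix.mul_assoc]
      _ = 0 := by simp [hU]
  · exact (rank_mul_le_left _ _).trans (rank_mul_le_right _ _)
  · calc J.rank = (L * (U * J * Uᵀ) * Lᵀ).rank := by
          congr 1
          calc J = L * U * J * (L * U)ᵀ := by simp [hLU]
            _ = L * (U * J * Uᵀ) * Lᵀ := by simp only [transpose_mul, Matrix.mul_assoc]
      _ ≤ (U * J * Uᵀ).rank := (rank_mul_le_left _ _).trans (rank_mul_le_right _ _)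

end Stratum

section IsotropicFrame

variable {ι m R : Type*} [DecidableEq ι] [CommRing R]

/-- The matrix with columns `v_j + c w_j` for `j` in `m`, where `v_j` and `w_j` are the standard
basis vectors whose indices are the two copies of `j` in `ι` given by `e`. For `c ^ 2 = -1` its
columns span a totally isotropic subspace, which is the range of the base point of the orbit. -/
def isotropicFrame (e : m ⊕ m ↪ ι) (c : R) : Matrix ι m R :=
  (1 : Matrix ι ι R).submatrix id (e ∘ Sum.inl) +
    c • (1 : Matrix ι ι R).submatrix id (e ∘ Sum.inr)

lemma isotropicFrame_apply_of_notMem_range {e : m ⊕ m ↪ ι} {i : ι} (hi : i ∉ Set.range e) (c : R)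
    (j : m) : isotropicFrame e c i j = 0 := by
  have hne : ∀ x, i ≠ e x := fun x hx => hi ⟨x, hx.symm⟩
  simp [isotropicFrame, hne]

variable [Fintype ι]

lemma submatrix_one_mul_isotropicFrame [DecidableEq m] (e : m ⊕ m ↪ ι) (c : R) :
    (1 : Matrix ι ι R).submatrix (e ∘ Sum.inl) id * isotropicFrame e c = 1 := by
  ext a b
  simp [isotropicFrame, Matrix.mul_add, ← submatrix_mul _ _ _ _ _ Function.bijective_id, one_apply]

lemma transpose_isotropicFrame_mul_self (e : m ⊕ m ↪ ι) {c : R} (hc : c * c = -1) :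
    (isotropicFrame e c)ᵀ * isotropicFrame e c = 0 := by
  classical
  ext a b
  by_cases hab : a = b <;>
    simp [isotropicFrame, Matrix.mul_add, Matrix.add_mul,
      ← submatrix_mul _ _ _ _ _ Function.bijective_id, one_apply, hc, hab]

end IsotropicFrame

theorem exists_mem_skewSquareZero_row_eq_zero {ι K : Type*} [Fintype ι] [Field K] [IsAlgClosed K]
    {k : ℕ} (hk : 4 * k < Fintype.card ι) :
    ∃ M ∈ skewSquareZero ι K (2 * k), ∃ i, ∀ j, M i j = 0 := by
  classical
  let m := Fin k ⊕ Fin k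
  have hcard : Fintype.card (m ⊕ m) < Fintype.card ι := by
    simp only [m, Fintype.card_sum, Fintype.card_fin]
    omega
  obtain ⟨e⟩ : Nonempty (m ⊕ m ↪ ι) := Function.Embedding.nonempty_of_card_le hcard.le
  obtain ⟨i, hi⟩ : ∃ i, i ∉ Set.range e := by
    by_contra! he
    exact hcard.not_ge (Fintype.card_le_of_surjective e he)
  obtain ⟨c, hc⟩ := IsAlgClosed.exists_pow_nat_eq (-1 : K) two_pos
  have hJ : (J (Fin k) K).rank = 2 * k := by
    rw [rank_of_isUnit _ ((isUnit_iff_isUnit_det _).2 (isUnit_det_J (Fin k) K)),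
      Fintype.card_sum, Fintype.card_fin, two_mul]
  refine ⟨isotropicFrame e c * J (Fin k) K * (isotropicFrame e c)ᵀ, ?_, i, fun j => ?_⟩
  · rw [← hJ]
    exact mul_mul_transpose_mem_skewSquareZero
      (transpose_isotropicFrame_mul_self e (by rw [← sq, hc]))
      (submatrix_one_mul_isotropicFrame e c) (J_transpose _ _)
  · simp [mul_apply, isotropicFrame_apply_of_notMem_range hi]

theorem submaximal_rank_single_orbit_general {ι K : Type*} [Fintype ι] [DecidableEq ι] [Field K]
    [IsAlgClosed K] [NeZero (2 : K)] {k : ℕ} (hk : 4 * k < Fintype.card ι) :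
    ∃ M₀ ∈ skewSquareZero ι K (2 * k),
      skewSquareZero ι K (2 * k) = {M | ∃ A ∈ specialOrthogonalGroup ι K, M = A * M₀ * A⁻¹} := by
  obtain ⟨M₀, hM₀, i, hrow⟩ := exists_mem_skewSquareZero_row_eq_zero (K := K) hk
  have hcol : ∀ j, M₀ j i = 0 := fun j => by simpa [hrow] using congrFun (congrFun hM₀.1 i) j
  refine ⟨M₀, hM₀, Set.ext fun M => ⟨fun hM => ?_, ?_⟩⟩
  · obtain ⟨A, hA, hAM⟩ := exists_mem_orthogonalGroup_semiconjBy_of_mem_skewSquareZero hM₀ hM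
    obtain ⟨B, hB, hBM⟩ :=
      exists_mem_specialOrthogonalGroup_semiconjBy_of_row_col_eq_zero hrow hcol hA hAM
    refine ⟨B, hB, ?_⟩
    have hdet : B.det = 1 := (mem_specialOrthogonalGroup_iff.1 hB).2
    rw [hBM.eq, mul_nonsing_inv_cancel_right _ _ (by simp [hdet])]
  · rintro ⟨A, hA, rfl⟩
    exact conj_mem_skewSquareZero hM₀ (mem_specialOrthogonalGroup_iff.1 hA).1

/-- For 0 ≤ k < n, the square-zero antisymmetric 4n×4n complex matrices of submaximal
rank 2k form a single SO(4n, ℂ)-orbit (the nilpotent orbit of the partition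
(2^{2k}, 1^{4n−4k}) of SO(4n), which is not very even). -/
theorem submaximal_rank_single_orbit (n k : ℕ) (hn : 1 ≤ n) (hk : k < n) :
    ∃ M₀ ∈ {M : Matrix (Fin (4 * n)) (Fin (4 * n)) ℂ |
        Mᵀ = -M ∧ M * M = 0 ∧ M.rank = 2 * k},
      {M : Matrix (Fin (4 * n)) (Fin (4 * n)) ℂ |
        Mᵀ = -M ∧ M * M = 0 ∧ M.rank = 2 * k} = soOrbit M₀ := by
  obtain ⟨M₀, hM₀, horbit⟩ := submaximal_rank_single_orbit_general (K := ℂ) (k := k)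
    (show 4 * k < Fintype.card (Fin (4 * n)) by simpa using hk)
  exact ⟨M₀, hM₀, horbit.trans <| by
    simp only [soOrbit, mem_specialOrthogonalGroup_iff, mem_orthogonalGroup_iff', and_assoc]⟩
end
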